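/- For every integer r ≥ 2 and every subset 𝒫 ⊂ R^(r) with |𝒫| = 2^(r−1) − 1 (that is, 𝒫 consists of all r-partite r-patterns except one), asymptotically almost surely z_𝒫(RM_n^(r)) = Θ(n^(1−1/r)); that is, there exist constants c₁, c₂ > 0 (depending only on r and 𝒫) such that the probability that c₁·n^(1−1/r) ≤ z_𝒫(RM_n^(r)) ≤ c₂·n^(1−1/r) tends to 1 as n → ∞. -/

import Mathlib

open Finset
open scoped Classical

/-- An ordered `r`-matching of size `n`: a partition of `[r*n] = {1,…,r*n}` into `n`
pairwise disjoint `r`-element subsets (the edges). -/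
def IsOrderedMatching (r n : ℕ) (M : Finset (Finset ℕ)) : Prop :=
  M.card = n ∧ (∀ e ∈ M, e.card = r) ∧
  (∀ e ∈ M, ∀ f ∈ M, e ≠ f → Disjoint e f) ∧
  M.biUnion id = Finset.Icc 1 (r * n)

/-- Two disjoint `r`-element sets `e`, `f` form the `r`-pattern `P`: the unique
order-preserving bijection from `e ∪ f` onto `[2r]` maps the pair `{e, f}` onto `P`. -/
def FormsPattern (r : ℕ) (e f : Finset ℕ) (P : Finset (Finset ℕ)) : Prop :=
  ∃ φ : ℕ → ℕ, StrictMonoOn φ ↑(e ∪ f) ∧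
    (e ∪ f).image φ = Finset.Icc 1 (2 * r) ∧
    ({e.image φ, f.image φ} : Finset (Finset ℕ)) = P

/-- A `Ps`-clique: a family of pairwise disjoint `r`-element subsets of `ℕ`, every two of
which form a pattern belonging to `Ps`. -/
def IsClique (r : ℕ) (Ps : Set (Finset (Finset ℕ))) (K : Finset (Finset ℕ)) : Prop :=
  (∀ e ∈ K, e.card = r) ∧ (∀ e ∈ K, ∀ f ∈ K, e ≠ f → Disjoint e f) ∧
  (∀ e ∈ K, ∀ f ∈ K, e ≠ f → ∃ P ∈ Ps, FormsPattern r e f P)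

/-- `z_Ps(M)`: the maximum size of a subfamily of `M` that is a `Ps`-clique. -/
noncomputable def zClique (r : ℕ) (Ps : Set (Finset (Finset ℕ))) (M : Finset (Finset ℕ)) : ℕ :=
  sSup {k | ∃ K : Finset (Finset ℕ), K ⊆ M ∧ IsClique r Ps K ∧ K.card = k}

/-- All ordered `r`-matchings of size `n` (as a finset). -/
noncomputable def matchingFamilies (r n : ℕ) : Finset (Finset (Finset ℕ)) :=
  ((Finset.Icc 1 (r * n)).powerset.powerset).filter (IsOrderedMatching r n)

/-- The probability of the event `A` for a uniformly random ordered `r`-matching of size `n`. -/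
noncomputable def prob (r n : ℕ) (A : Finset (Finset ℕ) → Prop) : ℝ :=
  (((matchingFamilies r n).filter A).card : ℝ) / ((matchingFamilies r n).card : ℝ)

/-- Expectation of `X` with respect to a uniformly random ordered `r`-matching of size `n`. -/
noncomputable def expect (r n : ℕ) (X : Finset (Finset ℕ) → ℝ) : ℝ :=
  (∑ M ∈ matchingFamilies r n, X M) / ((matchingFamilies r n).card : ℝ)

/-- An `r`-partite `r`-pattern: each edge contains exactly one of `{2i-1, 2i}` for each
`i = 1, …, r`. -/
def IsPartitePattern (r : ℕ) (P : Finset (Finset ℕ)) : Prop :=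
  IsOrderedMatching r 2 P ∧
  ∀ e ∈ P, ∀ i ∈ Finset.Icc 1 r, (e ∩ {2 * i - 1, 2 * i}).card = 1

/-- An `r`-pattern `P` is collectable if there exist arbitrarily large `{P}`-cliques. -/
def Collectable (r : ℕ) (P : Finset (Finset ℕ)) : Prop :=
  ∀ k : ℕ, ∃ K : Finset (Finset ℕ), IsClique r {P} K ∧ K.card = k

/-- The word of a pattern `P` over `{A=true, B=false}`: the `j`-th letter is `true` iff
vertex `j` lies in the edge of `P` containing `1`. -/
noncomputable def patternWord (r : ℕ) (P : Finset (Finset ℕ)) : List Bool :=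
  (List.range (2 * r)).map (fun j => decide (∃ e ∈ P, 1 ∈ e ∧ j + 1 ∈ e))

/-- `lam` is a splitting of the word `w` into consecutive blocks of the form
`A^t B^t` or `B^t A^t` with half-lengths given by `lam`. -/
def IsBlockSplitting (w : List Bool) (lam : List ℕ) : Prop :=
  (∀ t ∈ lam, 1 ≤ t) ∧
  ∃ bs : List Bool, bs.length = lam.length ∧
    w = (List.zipWith (fun t b => List.replicate t b ++ List.replicate t !b) lam bs).flatten

/-- The pattern `P` has composition `lam` (the sequence of half-lengths of the blocks of
its unique splitting). -/
def HasComposition (r : ℕ) (P : Finset (Finset ℕ)) (lam : List ℕ) : Prop :=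
  IsBlockSplitting (patternWord r P) lam

/-- Two distinct collectable `r`-patterns are harmonious if they have the same composition. -/
def Harmonious (r : ℕ) (P Q : Finset (Finset ℕ)) : Prop :=
  P ≠ Q ∧ Collectable r P ∧ Collectable r Q ∧
  ∃ lam : List ℕ, HasComposition r P lam ∧ HasComposition r Q lam

/-- A pair of distinct `r`-patterns is a mismatch if exactly one of them is collectable, or
both are collectable but their compositions differ. -/
def Mismatch (r : ℕ) (P Q : Finset (Finset ℕ)) : Prop :=
  P ≠ Q ∧
  ((Collectable r P ∧ ¬ Collectable r Q) ∨
   (¬ Collectable r P ∧ Collectable r Q) ∨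
   (Collectable r P ∧ Collectable r Q ∧
     ¬ ∃ lam : List ℕ, HasComposition r P lam ∧ HasComposition r Q lam))

/-- The trace of an ordered `r`-matching of size `k` on `[rk]`: the `j`-th letter equals
`i` when `j` is the `i`-th smallest element of the edge containing `j`. -/
noncomputable def trace (r k : ℕ) (M : Finset (Finset ℕ)) : List ℕ :=
  (List.range (r * k)).map (fun j₀ =>
    ((Finset.Icc 1 (r * k)).filter
      (fun x => x ≤ j₀ + 1 ∧ ∃ e ∈ M, j₀ + 1 ∈ e ∧ x ∈ e)).card)

/-- `a_Ps(k)`: the number of `Ps`-cliques of size `k` whose edges partition `[rk]`. -/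
noncomputable def cliqueCount (r : ℕ) (Ps : Set (Finset (Finset ℕ))) (k : ℕ) : ℕ :=
  (((Finset.Icc 1 (r * k)).powerset.powerset).filter
    (fun M => IsOrderedMatching r k M ∧ IsClique r Ps M)).card

/-- The maximum size of any `Ps`-clique whatsoever. -/
noncomputable def maxCliqueSize (r : ℕ) (Ps : Set (Finset (Finset ℕ))) : ℕ :=
  sSup {k | ∃ K : Finset (Finset ℕ), IsClique r Ps K ∧ K.card = k}

/-- `M` contains a copy of the ordered `r`-matching `H` of size `k`: a subfamily `N ⊆ M` of
`k` edges such that the order-preserving bijection from the union of the edges of `N`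
onto `[rk]` maps `N` onto `H`. -/
def ContainsCopy (r k : ℕ) (H M : Finset (Finset ℕ)) : Prop :=
  ∃ N ⊆ M, N.card = k ∧ ∃ φ : ℕ → ℕ,
    StrictMonoOn φ ↑(N.biUnion id) ∧
    (N.biUnion id).image φ = Finset.Icc 1 (r * k) ∧
    N.image (fun e => e.image φ) = H

/-- Delete the `j`-th smallest element of the finite set `e`. -/
def deleteJth (j : ℕ) (e : Finset ℕ) : Finset ℕ :=
  e.filter (fun x => (e.filter (· ≤ x)).card ≠ j)

/-- Relabel the elements of `e` order-preservingly by their ranks in `V`. -/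
def relabel (V : Finset ℕ) (e : Finset ℕ) : Finset ℕ :=
  e.image (fun x => (V.filter (· ≤ x)).card)

/-- `S^(−j)`: delete from each edge of the pattern `S` its `j`-th smallest element and
relabel the remaining vertices order-preservingly. -/
def patternDelete (j : ℕ) (S : Finset (Finset ℕ)) : Finset (Finset ℕ) :=
  (S.image (deleteJth j)).image (relabel ((S.image (deleteJth j)).biUnion id))

/-- Edge of a partite pattern with sign vector `s`. -/
def signSet (r : ℕ) (s : Fin r → Bool) : Finset ℕ :=
  univ.image (fun i : Fin r => 2 * (i : ℕ) + 1 + (if s i then 0 else 1))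

/-- Partite pattern with sign vector `s`. -/
def signPat (r : ℕ) (s : Fin r → Bool) : Finset (Finset ℕ) :=
  {signSet r s, signSet r (fun i => !s i)}

/-- Sorted vector of an `r`-set. -/
noncomputable def vec (r : ℕ) (e : Finset ℕ) : Fin r → ℕ :=
  if h : e.card = r then e.orderEmbOfFin h else 0

lemma vec_strictMono {r : ℕ} {e : Finset ℕ} (h : e.card = r) : StrictMono (vec r e) := by
  simp only [vec, h, dif_pos]
  exact (e.orderEmbOfFin h).strictMono

lemma image_vec {r : ℕ} {e : Finset ℕ} (h : e.card = r) : univ.image (vec r e) = e := by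
  have : vec r e = e.orderEmbOfFin h := by simp [vec, h]
  rw [this]
  apply Finset.coe_injective
  rw [coe_image, coe_univ, Set.image_univ, range_orderEmbOfFin]

lemma vec_mem {r : ℕ} {e : Finset ℕ} (h : e.card = r) (i : Fin r) : vec r e i ∈ e := by
  have := mem_image_of_mem (vec r e) (mem_univ i)
  rwa [image_vec h] at this

lemma strictMono_image_inj {r : ℕ} {x y : Fin r → ℕ} (hx : StrictMono x) (hy : StrictMono y)
    (h : univ.image x = univ.image y) : x = y := by
  have : Set.range x = Set.range y := by
    have := congrArg (fun s : Finset ℕ => (s : Set ℕ)) h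
    simpa using this
  exact (hx.range_inj hy).1 this

lemma vec_unique {r : ℕ} {x : Fin r → ℕ} (hx : StrictMono x) :
    vec r (univ.image x) = x := by
  have hc : (univ.image x).card = r := by
    rw [card_image_of_injective _ hx.injective]; simp
  exact strictMono_image_inj (vec_strictMono hc) hx (image_vec hc)

lemma sign_strictMono {r : ℕ} (s : Fin r → Bool) :
    StrictMono (fun i : Fin r => 2 * (i : ℕ) + 1 + (if s i then 0 else 1)) := by
  intro i j hij
  have : (i : ℕ) < j := hij
  dsimp only
  split_ifs <;> omega

lemma odd_mem_signSet {r : ℕ} (s : Fin r → Bool) (i : Fin r) :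
    2 * (i : ℕ) + 1 ∈ signSet r s ↔ s i = true := by
  simp only [signSet, mem_image, mem_univ, true_and]
  constructor
  · rintro ⟨j, hj⟩
    have : j = i := by
      apply Fin.ext
      split_ifs at hj <;> omega
    subst this
    by_contra h
    simp [h] at hj
  · intro h
    exact ⟨i, by simp [h]⟩

lemma signSet_inj {r : ℕ} {s t : Fin r → Bool} (h : signSet r s = signSet r t) : s = t := by
  funext i
  have h1 := odd_mem_signSet s i
  rw [h, odd_mem_signSet t i] at h1
  exact (Bool.eq_iff_iff.2 h1).symm

lemma signSet_ne {r : ℕ} (hr : 0 < r) (s : Fin r → Bool) :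
    signSet r s ≠ signSet r (fun i => !s i) := by
  intro h
  have := congrFun (signSet_inj h) ⟨0, hr⟩
  simp at this

lemma signPat_not {r : ℕ} (s : Fin r → Bool) : signPat r (fun i => !s i) = signPat r s := by
  simp [signPat, pair_comm]

lemma pair_eq_cases {α : Type*} [DecidableEq α] {a b c d : α} (_hcd : c ≠ d)
    (h : ({a, b} : Finset α) = {c, d}) : (a = c ∧ b = d) ∨ (a = d ∧ b = c) := by
  have ha : a ∈ ({c, d} : Finset α) := by rw [← h]; simp
  have hb : b ∈ ({c, d} : Finset α) := by rw [← h]; simp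
  have hc : c ∈ ({a, b} : Finset α) := by rw [h]; simp
  have hd : d ∈ ({a, b} : Finset α) := by rw [h]; simp
  simp only [mem_insert, mem_singleton] at *
  grind

lemma signPat_inj {r : ℕ} (hr : 0 < r) {s t : Fin r → Bool} (h : signPat r s = signPat r t) :
    s = t ∨ s = fun i => !t i := by
  rcases pair_eq_cases (signSet_ne hr t) h with h | h
  · exact Or.inl (signSet_inj h.1)
  · exact Or.inr (signSet_inj h.1)

/-- A set with one element from each pair is a sign set. -/
lemma exists_sign {r : ℕ} {A : Finset ℕ} (hA : A ⊆ Icc 1 (2 * r))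
    (h : ∀ i ∈ Icc 1 r, (A ∩ {2 * i - 1, 2 * i}).card = 1) : ∃ s, A = signSet r s := by
  refine ⟨fun i => decide (2 * (i : ℕ) + 1 ∈ A), ?_⟩
  have key : ∀ i : Fin r, (2 * (i : ℕ) + 2 ∈ A ↔ ¬ 2 * (i : ℕ) + 1 ∈ A) := by
    intro i
    have := h (i + 1) (by simp)
    rw [show 2 * ((i : ℕ) + 1) - 1 = 2 * i + 1 by omega,
      show 2 * ((i : ℕ) + 1) = 2 * i + 2 by ring] at this
    by_cases h1 : 2 * (i : ℕ) + 1 ∈ A <;> by_cases h2 : 2 * (i : ℕ) + 2 ∈ A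
    · rw [inter_eq_right.2 (by intro x; simp; rintro (rfl | rfl) <;> assumption)] at this
      simp at this
    · simp [h1, h2]
    · simp [h1, h2]
    · rw [inter_comm, insert_inter_of_notMem h1, singleton_inter_of_notMem h2] at this
      simp at this
  ext x
  simp only [signSet, mem_image, mem_univ, true_and, decide_eq_true_eq]
  constructor
  · intro hx
    have hx' := hA hx
    simp at hx'
    refine ⟨⟨(x - 1) / 2, by omega⟩, ?_⟩
    dsimp only
    have hk := key ⟨(x - 1) / 2, by omega⟩
    dsimp only at hk
    rcases Nat.even_or_odd' x with ⟨k, hk' | hk'⟩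
    · have e1 : 2 * ((x - 1) / 2) + 2 = x := by omega
      rw [e1] at hk
      rw [if_neg (hk.1 hx)]; omega
    · have e1 : 2 * ((x - 1) / 2) + 1 = x := by omega
      rw [e1, if_pos hx]; rfl
  · rintro ⟨i, rfl⟩
    split_ifs with h1
    · exact h1
    · exact (key i).2 h1

lemma signSet_disjoint_eq {r : ℕ} {s t : Fin r → Bool}
    (h : Disjoint (signSet r s) (signSet r t)) : t = fun i => !s i := by
  funext i
  have h1 : ∀ s : Fin r → Bool, s i = false → 2 * (i : ℕ) + 2 ∈ signSet r s := by
    intro s hs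
    simp only [signSet, mem_image, mem_univ, true_and]
    exact ⟨i, by simp [hs]⟩
  rw [disjoint_left] at h
  rcases hs : s i with _ | _ <;> rcases ht : t i with _ | _
  · exact (h (h1 s hs) (h1 t ht)).elim
  · rfl
  · rfl
  · exact (h ((odd_mem_signSet s i).2 hs) ((odd_mem_signSet t i).2 ht)).elim

lemma partite_eq_signPat {r : ℕ} {P : Finset (Finset ℕ)} (h : IsPartitePattern r P) :
    ∃ s, P = signPat r s := by
  obtain ⟨⟨hc, hr, hd, hu⟩, hp⟩ := h
  obtain ⟨A, B, hAB, rfl⟩ := card_eq_two.1 hc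
  have hs : ∀ X ∈ ({A, B} : Finset (Finset ℕ)), X ⊆ Icc 1 (2 * r) := by
    intro X hX
    rw [mul_comm 2 r, ← hu]
    exact subset_biUnion_of_mem id hX
  obtain ⟨s, rfl⟩ := exists_sign (hs A (by simp)) (hp A (by simp))
  obtain ⟨t, rfl⟩ := exists_sign (hs B (by simp)) (hp B (by simp))
  have := signSet_disjoint_eq (hd _ (by simp) _ (by simp) hAB)
  subst this
  exact ⟨s, rfl⟩

/-- strict comparability with respect to the signs `s` -/
def SLt {r : ℕ} (s : Fin r → Bool) (x y : Fin r → ℕ) : Prop :=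
  ∀ i, if s i then x i < y i else y i < x i

lemma forms_signPat {r : ℕ} (hr : 0 < r) {e f : Finset ℕ} (he : e.card = r) (hf : f.card = r)
    {s t : Fin r → Bool}
    (h : FormsPattern r e f (signPat r t)) (hlt : SLt s (vec r e) (vec r f)) :
    signPat r t = signPat r s := by
  obtain ⟨φ, hm, hi, hP⟩ := h
  have main : ∀ u : Fin r → Bool, e.image φ = signSet r u → f.image φ = signSet r (fun i => !u i) →
      u = s := by
    intro u h1 h2
    have mono : ∀ g : Finset ℕ, g.card = r → g ⊆ e ∪ f → StrictMono (φ ∘ vec r g) := by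
      intro g hg hsub i j hij
      exact hm (hsub (vec_mem hg i)) (hsub (vec_mem hg j)) (vec_strictMono hg hij)
    have e1 := strictMono_image_inj (mono e he subset_union_left) (sign_strictMono u) (by
      rw [← image_image, image_vec he, h1]; rfl)
    have e2 := strictMono_image_inj (mono f hf subset_union_right)
      (sign_strictMono (fun i => !u i)) (by
      rw [← image_image, image_vec hf, h2]; rfl)
    funext i
    have a1 := congrFun e1 i
    have a2 := congrFun e2 i
    simp only [Function.comp] at a1 a2
    have hl := hlt i
    have hvx : vec r e i ∈ (↑(e ∪ f) : Set ℕ) := by simp [vec_mem he i]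
    have hvy : vec r f i ∈ (↑(e ∪ f) : Set ℕ) := by simp [vec_mem hf i]
    rcases hs : s i with _ | _ <;> rcases hu : u i with _ | _ <;> simp [hs, hu] at hl a1 a2 ⊢
    · have := hm hvy hvx hl
      omega
    · have := hm hvx hvy hl
      omega
  rcases pair_eq_cases (signSet_ne hr t) hP with h | h
  · rw [main t h.1 h.2]
  · have := main (fun i => !t i) h.1 (by simp [h.2])
    rw [← this, signPat_not]

lemma forms_of_interleaved {r : ℕ} {e f : Finset ℕ} (he : e.card = r) (hf : f.card = r)
    (hd : Disjoint e f)
    (h1 : ∀ i j : Fin r, i < j → vec r e i < vec r f j)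
    (h2 : ∀ i j : Fin r, i < j → vec r f i < vec r e j) :
    FormsPattern r e f (signPat r (fun i => decide (vec r e i < vec r f i))) := by
  set x := vec r e with hx
  set y := vec r f with hy
  set s : Fin r → Bool := fun i => decide (x i < y i) with hs
  set a : Fin r → ℕ := fun i => 2 * (i : ℕ) + 1 + (if s i then 0 else 1) with ha
  set b : Fin r → ℕ := fun i => 2 * (i : ℕ) + 1 + (if !s i then 0 else 1) with hb
  have hxm : StrictMono x := vec_strictMono he
  have hym : StrictMono y := vec_strictMono hf
  have hne : ∀ i j, x i ≠ y j := by
    intro i j hij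
    exact (disjoint_left.1 hd) (vec_mem he i) (by rw [← hx, hij]; exact vec_mem hf j)
  let φ : ℕ → ℕ := Function.extend x a (Function.extend y b 0)
  have px : ∀ i, φ (x i) = a i := fun i => hxm.injective.extend_apply _ _ _
  have py : ∀ i, φ (y i) = b i := by
    intro i
    have : φ (y i) = Function.extend y b 0 (y i) :=
      Function.extend_apply' _ _ _ (by rintro ⟨j, hj⟩; exact hne j i hj)
    rw [this, hym.injective.extend_apply]
  have ee : e = univ.image x := (image_vec he).symm
  have ef : f = univ.image y := (image_vec hf).symm
  have ie : e.image φ = signSet r s := by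
    rw [ee, image_image]
    exact image_congr (fun i _ => px i)
  have iff' : f.image φ = signSet r (fun i => !s i) := by
    rw [ef, image_image]
    exact image_congr (fun i _ => by simp only [Function.comp, py]; simp [hb])
  have sx : ∀ i, s i = true ↔ x i < y i := fun i => by simp [hs]
  refine ⟨φ, ?_, ?_, ?_⟩
  · have key : ∀ z ∈ e ∪ f, ∃ i, (z = x i ∧ φ z = a i) ∨ (z = y i ∧ φ z = b i) := by
      intro z hz
      rcases mem_union.1 hz with h | h
      · rw [ee] at h
        obtain ⟨i, -, rfl⟩ := mem_image.1 h
        exact ⟨i, Or.inl ⟨rfl, px i⟩⟩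
      · rw [ef] at h
        obtain ⟨i, -, rfl⟩ := mem_image.1 h
        exact ⟨i, Or.inr ⟨rfl, py i⟩⟩
    intro z hz w hw hzw
    obtain ⟨i, hi⟩ := key z hz
    obtain ⟨j, hj⟩ := key w hw
    have bd : ∀ i, a i ≤ 2 * i + 2 ∧ b i ≤ 2 * i + 2 ∧ 2 * i + 1 ≤ a i ∧ 2 * i + 1 ≤ b i := by
      intro i
      simp only [ha, hb]
      split_ifs <;> omega
    rcases lt_trichotomy i j with hij | hij | hij
    · have := bd i
      have := bd j
      have : (i : ℕ) < j := hij
      omega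
    · subst hij
      have hsi := sx i
      rcases hi with ⟨q1, q2⟩ | ⟨q1, q2⟩ <;> rcases hj with ⟨q3, q4⟩ | ⟨q3, q4⟩
      · omega
      · rw [q2, q4]
        have : s i = true := hsi.2 (by omega)
        simp [ha, hb, this]
      · rw [q2, q4]
        have : s i = false := by
          rw [← Bool.not_eq_true, hsi]; omega
        simp [ha, hb, this]
      · omega
    · exfalso
      have w1 := h1 j i hij
      have w2 := h2 j i hij
      have w3 := hxm hij
      have w4 := hym hij
      omega
  · rw [image_union, ie, iff']
    ext z
    simp only [signSet, mem_union, mem_image, mem_univ, true_and, mem_Icc]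
    constructor
    · rintro (⟨i, rfl⟩ | ⟨i, rfl⟩) <;> split_ifs <;> omega
    · rintro ⟨z1, z2⟩
      have hlt : (z - 1) / 2 < r := by omega
      rcases Nat.even_or_odd' z with ⟨k, hk⟩
      rcases hsv : s ⟨(z - 1) / 2, hlt⟩ with _ | _ <;> rcases hk with hk | hk
      · left; refine ⟨⟨(z - 1) / 2, hlt⟩, ?_⟩; simp [hsv]; omega
      · right; refine ⟨⟨(z - 1) / 2, hlt⟩, ?_⟩; simp [hsv]; omega
      · right; refine ⟨⟨(z - 1) / 2, hlt⟩, ?_⟩; simp [hsv]; omega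
      · left; refine ⟨⟨(z - 1) / 2, hlt⟩, ?_⟩; simp [hsv]; omega
  · rw [ie, iff']; rfl

/-- The missing pattern. -/
lemma exists_missing {r : ℕ} (hr : 0 < r) (Ps : Finset (Finset (Finset ℕ)))
    (hPs : ∀ P ∈ Ps, IsPartitePattern r P) (hcard : Ps.card = 2 ^ (r - 1) - 1) :
    ∃ s : Fin r → Bool, signPat r s ∉ Ps ∧
      ∀ t, t ≠ s → (t ≠ fun i => !s i) → signPat r t ∈ Ps := by
  obtain ⟨k, rfl⟩ : ∃ k, r = k + 1 := ⟨r - 1, by omega⟩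
  let F : (Fin k → Bool) → Finset (Finset ℕ) := fun u => signPat (k + 1) (Fin.cons true u)
  have hF : Function.Injective F := by
    intro u v huv
    rcases signPat_inj hr huv with h | h
    · exact (Fin.cons_injective2 h).2
    · have := congrFun h 0
      simp at this
  have hR : ∀ t, signPat (k + 1) t ∈ univ.image F := by
    intro t
    rw [mem_image]
    rcases h0 : t 0 with _ | _
    · refine ⟨Fin.tail (fun i => !t i), mem_univ _, ?_⟩
      have : Fin.cons true (Fin.tail (fun i => !t i)) = fun i => !t i := by
        conv_rhs => rw [← Fin.cons_self_tail (fun i => !t i)]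
        simp [h0]
      simp only [F, this, signPat_not]
    · refine ⟨Fin.tail t, mem_univ _, ?_⟩
      simp only [F]
      rw [← h0, Fin.cons_self_tail]
  have hsub : Ps ⊆ univ.image F := by
    intro P hP
    obtain ⟨s, rfl⟩ := partite_eq_signPat (hPs P hP)
    exact hR s
  have hc : (univ.image F).card = 2 ^ k := by
    rw [card_image_of_injective _ hF]; simp
  have hd : (univ.image F \ Ps).card = 1 := by
    rw [card_sdiff_of_subset hsub, hc, hcard]
    have : 0 < 2 ^ k := by positivity
    simp only [Nat.add_sub_cancel]
    omega
  obtain ⟨P, hP⟩ := card_eq_one.1 hd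
  have hPm : P ∈ univ.image F \ Ps := by rw [hP]; simp
  obtain ⟨u, -, hu⟩ := mem_image.1 (mem_sdiff.1 hPm).1
  refine ⟨Fin.cons true u, ?_, ?_⟩
  · have := (mem_sdiff.1 hPm).2
    rw [← hu] at this
    exact this
  · intro t h1 h2
    by_contra h
    have : signPat (k + 1) t ∈ univ.image F \ Ps := mem_sdiff.2 ⟨hR t, h⟩
    rw [hP, mem_singleton, ← hu] at this
    rcases signPat_inj hr this with h | h
    · exact h1 h
    · exact h2 h

lemma le_zClique {r : ℕ} {Q : Set (Finset (Finset ℕ))} {M K : Finset (Finset ℕ)}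
    (hK : K ⊆ M) (hc : IsClique r Q K) : K.card ≤ zClique r Q M := by
  apply le_csSup
  · refine ⟨M.card, ?_⟩
    rintro k ⟨K, hK, -, rfl⟩
    exact card_le_card hK
  · exact ⟨K, hK, hc, rfl⟩

lemma exists_zClique (r : ℕ) (Q : Set (Finset (Finset ℕ))) (M : Finset (Finset ℕ)) :
    ∃ K ⊆ M, IsClique r Q K ∧ K.card = zClique r Q M := by
  have : zClique r Q M ∈ {k | ∃ K : Finset (Finset ℕ), K ⊆ M ∧ IsClique r Q K ∧ K.card = k} := by
    apply Nat.sSup_mem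
    · exact ⟨0, ∅, by simp, ⟨by simp, by simp, by simp⟩, rfl⟩
    · refine ⟨M.card, ?_⟩
      rintro k ⟨K, hK, -, rfl⟩
      exact card_le_card hK
  obtain ⟨K, h1, h2, h3⟩ := this
  exact ⟨K, h1, h2, h3⟩

/-- Perfect matchings of `V` into `r`-sets. -/
noncomputable def pm (r : ℕ) (V : Finset ℕ) : Finset (Finset (Finset ℕ)) :=
  (V.powerset.powerset).filter (fun M => (∀ e ∈ M, e.card = r) ∧
    (∀ e ∈ M, ∀ f ∈ M, e ≠ f → Disjoint e f) ∧ M.biUnion id = V)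

lemma mem_pm {r : ℕ} {V : Finset ℕ} {M : Finset (Finset ℕ)} :
    M ∈ pm r V ↔ (∀ e ∈ M, e.card = r) ∧
    (∀ e ∈ M, ∀ f ∈ M, e ≠ f → Disjoint e f) ∧ M.biUnion id = V := by
  simp only [pm, mem_filter, mem_powerset, and_iff_right_iff_imp]
  rintro ⟨-, -, h⟩ e he
  rw [mem_powerset, ← h]
  exact subset_biUnion_of_mem id he

lemma pm_card_mul {r : ℕ} {V : Finset ℕ} {M : Finset (Finset ℕ)} (h : M ∈ pm r V) :
    V.card = r * M.card := by
  obtain ⟨h1, h2, h3⟩ := mem_pm.1 h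
  rw [← h3, card_biUnion]
  · change ∑ u ∈ M, u.card = _
    rw [sum_congr rfl (g := fun _ => r) (fun e he => h1 e he)]
    simp [mul_comm]
  · intro e he f hf hne
    exact h2 e he f hf hne

lemma matchingFamilies_eq {r : ℕ} (hr : 0 < r) (n : ℕ) :
    matchingFamilies r n = pm r (Icc 1 (r * n)) := by
  ext M
  simp only [matchingFamilies, mem_filter, mem_powerset, IsOrderedMatching]
  constructor
  · rintro ⟨-, -, h⟩
    exact mem_pm.2 h
  · intro h
    refine ⟨?_, ?_, mem_pm.1 h⟩
    · have := (mem_filter.1 h).1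
      simpa using this
    · have := pm_card_mul h
      simp at this
      rcases this with h | h
      · exact h.symm
      · omega

lemma sdiff_mem_pm {r : ℕ} {V : Finset ℕ} {M G : Finset (Finset ℕ)} (h : M ∈ pm r V)
    (hG : G ⊆ M) : M \ G ∈ pm r (V \ G.biUnion id) := by
  obtain ⟨h1, h2, h3⟩ := mem_pm.1 h
  refine mem_pm.2 ⟨fun e he => h1 e (mem_sdiff.1 he).1,
    fun e he f hf => h2 e (mem_sdiff.1 he).1 f (mem_sdiff.1 hf).1, ?_⟩
  ext x
  rw [← h3]
  simp only [mem_biUnion, mem_sdiff, id]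
  constructor
  · rintro ⟨e, ⟨he, heG⟩, hx⟩
    refine ⟨⟨e, he, hx⟩, ?_⟩
    rintro ⟨f, hf, hxf⟩
    have hne : e ≠ f := fun hh => heG (hh ▸ hf)
    exact disjoint_left.1 (h2 e he f (hG hf) hne) hx hxf
  · rintro ⟨⟨e, he, hx⟩, hn⟩
    exact ⟨e, ⟨he, fun hh => hn ⟨e, hh, hx⟩⟩, hx⟩

/-- matchings containing `G` inject into the matchings of the rest -/
lemma card_containing_le {r : ℕ} (V : Finset ℕ) (G : Finset (Finset ℕ)) :
    ((pm r V).filter (fun M => G ⊆ M)).card ≤ (pm r (V \ G.biUnion id)).card := by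
  apply card_le_card_of_injOn (fun M => M \ G)
  · intro M hM
    have hM := mem_filter.1 (mem_coe.1 hM)
    exact sdiff_mem_pm hM.1 hM.2
  · intro M hM N hN h
    have hM := (mem_filter.1 (mem_coe.1 hM)).2
    have hN := (mem_filter.1 (mem_coe.1 hN)).2
    have h : M \ G = N \ G := h
    rw [← sdiff_union_of_subset hM, ← sdiff_union_of_subset hN, h]

lemma card_containing_one {r : ℕ} (hr : 0 < r) (V : Finset ℕ) (e : Finset ℕ) (he : e ⊆ V)
    (hc : e.card = r) :
    ((pm r V).filter (fun M => e ∈ M)).card = (pm r (V \ e)).card := by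
  apply le_antisymm
  · have := card_containing_le (r := r) V {e}
    simpa using this
  · apply card_le_card_of_injOn (fun M => insert e M)
    · intro M hM
      obtain ⟨h1, h2, h3⟩ := mem_pm.1 (mem_coe.1 hM)
      have hd : ∀ f ∈ M, Disjoint e f := by
        intro f hf
        have : f ⊆ V \ e := by rw [← h3]; exact subset_biUnion_of_mem id hf
        exact (disjoint_of_subset_left this sdiff_disjoint).symm
      refine mem_coe.2 (mem_filter.2 ⟨mem_pm.2 ⟨?_, ?_, ?_⟩, mem_insert_self _ _⟩)
      · intro f hf
        rcases mem_insert.1 hf with rfl | hf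
        · exact hc
        · exact h1 f hf
      · intro f hf g hg hne
        rcases mem_insert.1 hf with h5 | h5 <;> rcases mem_insert.1 hg with h6 | h6
        · exact (hne (h5.trans h6.symm)).elim
        · exact h5 ▸ hd g h6
        · exact h6 ▸ (hd f h5).symm
        · exact h2 f h5 g h6 hne
      · rw [biUnion_insert, h3]
        simpa using he
    · intro M hM N hN h
      have hn : ∀ M ∈ pm r (V \ e), e ∉ M := by
        intro M hM hh
        obtain ⟨h1, h2, h3⟩ := mem_pm.1 hM
        have : e ⊆ V \ e := by rw [← h3]; exact subset_biUnion_of_mem id hh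
        have h0 : e = ∅ := by
          apply eq_empty_of_forall_notMem
          intro x hx
          exact (mem_sdiff.1 (this hx)).2 hx
        rw [h0] at hc
        simp at hc
        omega
      have h : insert e M = insert e N := h
      rw [← erase_insert (hn M hM), ← erase_insert (hn N hN), h]

/-- Number of matchings. -/
noncomputable def nm (r n : ℕ) : ℕ := (pm r (Icc 1 (r * n))).card

lemma pm_formula {r : ℕ} (hr : 0 < r) (n : ℕ) : ∀ V : Finset ℕ, V.card = r * n →
    (pm r V).card * (r.factorial ^ n * n.factorial) = (r * n).factorial := by
  induction n with
  | zero =>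
    intro V hV
    have hV : V = ∅ := by simpa using hV
    subst hV
    have : pm r ∅ = {∅} := by
      ext M
      rw [mem_pm, mem_singleton]
      constructor
      · rintro ⟨h1, h2, h3⟩
        apply eq_empty_of_forall_notMem
        intro e he
        have h4 : e ⊆ M.biUnion id := subset_biUnion_of_mem id he
        rw [h3, subset_empty] at h4
        have := h1 e he
        rw [h4] at this
        simp at this
        omega
      · rintro rfl
        simp
    simp [this]
  | succ n ih =>
    intro V hV
    have hpos : 0 < r.factorial ^ n * n.factorial := by positivity
    have double : ∑ e ∈ powersetCard r V, ((pm r V).filter (fun M => e ∈ M)).card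
        = ∑ M ∈ pm r V, (n + 1) := by
      have : ∀ M ∈ pm r V, n + 1 = ((powersetCard r V).filter (fun e => e ∈ M)).card := by
        intro M hM
        have h1 := pm_card_mul hM
        rw [hV] at h1
        have h2 : M.card = n + 1 := (Nat.eq_of_mul_eq_mul_left hr h1).symm
        rw [← h2]
        congr 1
        ext e
        simp only [mem_filter, mem_powersetCard]
        constructor
        · intro he
          have hh := mem_pm.1 hM
          exact ⟨⟨by rw [← hh.2.2]; exact subset_biUnion_of_mem id he, hh.1 e he⟩, he⟩
        · exact fun h => h.2
      rw [sum_congr rfl this]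
      exact sum_card_bipartiteAbove_eq_sum_card_bipartiteBelow (fun e M => e ∈ M)
    have terms : ∀ e ∈ powersetCard r V, ((pm r V).filter (fun M => e ∈ M)).card
        * (r.factorial ^ n * n.factorial) = (r * n).factorial := by
      intro e he
      rw [mem_powersetCard] at he
      rw [card_containing_one hr V e he.1 he.2]
      apply ih
      rw [card_sdiff_of_subset he.1, hV, he.2, mul_add, mul_one, Nat.add_sub_cancel]
    have h2 := congrArg (· * (r.factorial ^ n * n.factorial)) double
    simp only [sum_mul] at h2
    rw [sum_congr rfl terms] at h2
    simp only [sum_const, card_powersetCard, smul_eq_mul, hV] at h2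
    have h3 : (r * (n+1)).choose r * r.factorial * (r * n).factorial = (r * (n + 1)).factorial := by
      have := Nat.choose_mul_factorial_mul_factorial (n := r * (n + 1)) (k := r) (by nlinarith)
      rwa [show r * (n + 1) - r = r * n by rw [mul_add, mul_one, Nat.add_sub_cancel]] at this
    rw [← h3, mul_right_comm, h2, Nat.factorial_succ, pow_succ]
    ring

lemma pm_card_eq {r : ℕ} (hr : 0 < r) (n : ℕ) (V : Finset ℕ) (hV : V.card = r * n) :
    (pm r V).card = nm r n := by
  have h1 := pm_formula hr n V hV
  have h2 := pm_formula hr n (Icc 1 (r * n)) (by simp)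
  have hpos : 0 < r.factorial ^ n * n.factorial := by positivity
  exact Nat.eq_of_mul_eq_mul_right hpos (h1.trans h2.symm)

lemma nm_pos {r : ℕ} (hr : 0 < r) (n : ℕ) : 0 < nm r n := by
  have h2 := pm_formula hr n (Icc 1 (r * n)) (by simp)
  have := Nat.factorial_pos (r * n)
  rw [← h2] at this
  exact Nat.pos_of_mul_pos_right this

lemma nm_succ {r : ℕ} (hr : 0 < r) (n : ℕ) :
    (n + 1) * nm r (n + 1) = (r * (n + 1)).choose r * nm r n := by
  have h1 := pm_formula hr n (Icc 1 (r * n)) (by simp)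
  have h2 := pm_formula hr (n + 1) (Icc 1 (r * (n + 1))) (by simp)
  have h3 : (r * (n+1)).choose r * r.factorial * (r * n).factorial = (r * (n + 1)).factorial := by
    have := Nat.choose_mul_factorial_mul_factorial (n := r * (n + 1)) (k := r) (by nlinarith)
    rwa [show r * (n + 1) - r = r * n by rw [mul_add, mul_one, Nat.add_sub_cancel]] at this
  have hpos : 0 < r.factorial ^ (n + 1) * n.factorial := by positivity
  apply Nat.eq_of_mul_eq_mul_right hpos
  rw [← h1, ← h2, Nat.factorial_succ] at h3
  change _ = nm r (n + 1) * _ at h3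
  change _ * (nm r n * _) = _ at h3
  linear_combination -h3

lemma nm_step {r : ℕ} (hr : 0 < r) (n : ℕ) :
    nm r n * (n + 1) ^ (r - 1) ≤ r.factorial * nm r (n + 1) := by
  have h1 := nm_succ hr n
  have h2 : (n + 1) ^ r ≤ r.factorial * (r * (n + 1)).choose r := by
    have := Nat.pow_sub_le_descFactorial (r * (n + 1)) r
    rw [Nat.descFactorial_eq_factorial_mul_choose] at this
    refine le_trans (Nat.pow_le_pow_left ?_ r) this
    rw [mul_add, mul_one]
    have : n ≤ r * n := Nat.le_mul_of_pos_left n hr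
    omega
  have h3 : (n + 1) * (nm r n * (n + 1) ^ (r - 1)) ≤ (n + 1) * (r.factorial * nm r (n + 1)) := by
    have e : (n + 1) ^ r = (n + 1) * (n + 1) ^ (r - 1) := by
      rw [← pow_succ']; congr 1; omega
    calc (n + 1) * (nm r n * (n + 1) ^ (r - 1)) = nm r n * (n + 1) ^ r := by rw [e]; ring
      _ ≤ nm r n * (r.factorial * (r * (n + 1)).choose r) := Nat.mul_le_mul_left _ h2
      _ = r.factorial * ((n + 1) * nm r (n + 1)) := by rw [h1]; ring
      _ = _ := by ring
  exact Nat.le_of_mul_le_mul_left h3 (by omega)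

lemma nm_steps {r : ℕ} (hr : 0 < r) (n s : ℕ) (hs : s ≤ n) :
    nm r (n - s) * (n.descFactorial s) ^ (r - 1) ≤ r.factorial ^ s * nm r n := by
  induction s with
  | zero => simp
  | succ s ih =>
    have ih := ih (by omega)
    have h1 := nm_step hr (n - (s + 1))
    rw [show n - (s + 1) + 1 = n - s by omega] at h1
    rw [Nat.descFactorial_succ, mul_pow, pow_succ]
    calc nm r (n - (s + 1)) * ((n - s) ^ (r - 1) * n.descFactorial s ^ (r - 1))
        = (nm r (n - (s + 1)) * (n - s) ^ (r - 1)) * n.descFactorial s ^ (r - 1) := by ring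
      _ ≤ (r.factorial * nm r (n - s)) * n.descFactorial s ^ (r - 1) := Nat.mul_le_mul_right _ h1
      _ = r.factorial * (nm r (n - s) * n.descFactorial s ^ (r - 1)) := by ring
      _ ≤ r.factorial * (r.factorial ^ s * nm r n) := Nat.mul_le_mul_left _ ih
      _ = _ := by ring

lemma desc_ratio (n s : ℕ) (hs : s ≤ n) : n ^ s * s.factorial ≤ s ^ s * n.descFactorial s := by
  -- prove n^j * s.desc j ≤ s^j * n.desc j
  have : ∀ j ≤ s, n ^ j * s.descFactorial j ≤ s ^ j * n.descFactorial j := by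
    intro j
    induction j with
    | zero => simp
    | succ j ih =>
      intro hj
      have ih := ih (by omega)
      rw [Nat.descFactorial_succ, Nat.descFactorial_succ, pow_succ, pow_succ]
      have h1 : n * (s - j) ≤ s * (n - j) := by
        rw [Nat.mul_sub, Nat.mul_sub, mul_comm n s]
        have : s * j ≤ n * j := Nat.mul_le_mul_right _ hs
        omega
      calc n ^ j * n * ((s - j) * s.descFactorial j)
          = (n * (s - j)) * (n ^ j * s.descFactorial j) := by ring
        _ ≤ (s * (n - j)) * (s ^ j * n.descFactorial j) := Nat.mul_le_mul h1 ih
        _ = _ := by ring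
  have := this s le_rfl
  rwa [Nat.descFactorial_self] at this

lemma pow_self_le (s : ℕ) : (s : ℝ) ^ s ≤ Real.exp 1 ^ s * s.factorial := by
  have h := Real.pow_div_factorial_le_exp (s : ℝ) (by positivity) s
  rw [div_le_iff₀ (by positivity)] at h
  rwa [← Real.exp_nat_mul, mul_one]

lemma desc_lower (n s : ℕ) (hs : s ≤ n) :
    (n : ℝ) ^ s ≤ Real.exp 1 ^ s * n.descFactorial s := by
  have h1 : (n : ℝ) ^ s * s.factorial ≤ (s : ℝ) ^ s * n.descFactorial s := by
    exact_mod_cast desc_ratio n s hs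
  have h2 := pow_self_le s
  have hf : (0 : ℝ) < s.factorial := by positivity
  have h3 : (n : ℝ) ^ s * s.factorial ≤ (Real.exp 1 ^ s * n.descFactorial s) * s.factorial :=
    calc _ ≤ _ := h1
      _ ≤ (Real.exp 1 ^ s * s.factorial) * n.descFactorial s := by gcongr
      _ = _ := by ring
  exact le_of_mul_le_mul_right h3 hf

/-- The constant of the edge probability bound. -/
noncomputable def C0 (r : ℕ) : ℝ := r.factorial * Real.exp 1 ^ (r - 1)

lemma C0_pos (r : ℕ) : 0 < C0 r := by unfold C0; positivity

lemma nm_ratio {r : ℕ} (hr : 0 < r) (n s : ℕ) (hn : 0 < n) (hs : s ≤ n) :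
    (nm r (n - s) : ℝ) ≤ (C0 r / (n : ℝ) ^ (r - 1)) ^ s * nm r n := by
  have h1 : (nm r (n - s) : ℝ) * (n.descFactorial s : ℝ) ^ (r - 1) ≤
      (r.factorial : ℝ) ^ s * nm r n := by exact_mod_cast nm_steps hr n s hs
  have h2 := pow_le_pow_left₀ (by positivity) (desc_lower n s hs) (r - 1)
  have hnp : (0 : ℝ) < ((n : ℝ) ^ (r - 1)) ^ s := by positivity
  rw [div_pow, div_mul_eq_mul_div, le_div_iff₀ hnp]
  calc (nm r (n - s) : ℝ) * ((n : ℝ) ^ (r - 1)) ^ s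
      = (nm r (n - s) : ℝ) * ((n : ℝ) ^ s) ^ (r - 1) := by rw [← pow_mul, ← pow_mul, mul_comm s]
    _ ≤ (nm r (n - s) : ℝ) * (Real.exp 1 ^ s * n.descFactorial s) ^ (r - 1) := by gcongr
    _ = (Real.exp 1 ^ (r - 1)) ^ s * ((nm r (n - s) : ℝ) * (n.descFactorial s : ℝ) ^ (r - 1)) := by
        rw [mul_pow, ← pow_mul, ← pow_mul, mul_comm s]; ring
    _ ≤ (Real.exp 1 ^ (r - 1)) ^ s * ((r.factorial : ℝ) ^ s * nm r n) := by gcongr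
    _ = _ := by rw [C0, mul_pow]; ring

lemma containing_bound {r : ℕ} (hr : 0 < r) (n : ℕ) (hn : 0 < n) (G : Finset (Finset ℕ)) :
    (((pm r (Icc 1 (r * n))).filter (fun M => G ⊆ M)).card : ℝ) ≤
      (C0 r / (n : ℝ) ^ (r - 1)) ^ G.card * nm r n := by
  have hC := C0_pos r
  by_cases he : ((pm r (Icc 1 (r * n))).filter (fun M => G ⊆ M)) = ∅
  · rw [he]; simp; positivity
  · obtain ⟨M, hM⟩ := nonempty_iff_ne_empty.2 he
    obtain ⟨hM, hG⟩ := mem_filter.1 hM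
    have hMc : M.card = n := by
      have := pm_card_mul hM
      simp at this
      rcases this with h | h
      · exact h.symm
      · omega
    have hGc : G.card ≤ n := hMc ▸ card_le_card hG
    have h1 := card_containing_le (r := r) (Icc 1 (r * n)) G
    have h3 : (Icc 1 (r * n) \ G.biUnion id).card = r * (n - G.card) := by
      rw [pm_card_mul (sdiff_mem_pm hM hG), card_sdiff_of_subset hG, hMc]
    rw [pm_card_eq hr _ _ h3] at h1
    exact le_trans (by exact_mod_cast h1) (nm_ratio hr n G.card hn hGc)

/-- Upper tail for the number of edges in a region `W`. -/
lemma tail_bound {r : ℕ} (hr : 0 < r) (n : ℕ) (hn : 0 < n) (W : Finset (Finset ℕ)) (x : ℕ)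
    (hx : 0 < x) :
    (((pm r (Icc 1 (r * n))).filter (fun M => x ≤ (M ∩ W).card)).card : ℝ) ≤
      (Real.exp 1 * W.card * (C0 r / (n : ℝ) ^ (r - 1)) / x) ^ x * nm r n := by
  have hC := C0_pos r
  have hsub : (pm r (Icc 1 (r * n))).filter (fun M => x ≤ (M ∩ W).card) ⊆
      (powersetCard x W).biUnion (fun G => (pm r (Icc 1 (r * n))).filter (fun M => G ⊆ M)) := by
    intro M hM
    obtain ⟨hM, h⟩ := mem_filter.1 hM
    obtain ⟨G, hG, hGc⟩ := exists_subset_card_eq h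
    refine mem_biUnion.2 ⟨G, mem_powersetCard.2 ⟨hG.trans inter_subset_right, hGc⟩, ?_⟩
    exact mem_filter.2 ⟨hM, hG.trans inter_subset_left⟩
  set p := C0 r / (n : ℝ) ^ (r - 1) with hp
  have hp0 : 0 < p := by positivity
  have h1 : (((pm r (Icc 1 (r * n))).filter (fun M => x ≤ (M ∩ W).card)).card : ℝ) ≤
      (W.card.choose x : ℝ) * (p ^ x * nm r n) := by
    calc _ ≤ (((powersetCard x W).biUnion
          (fun G => (pm r (Icc 1 (r * n))).filter (fun M => G ⊆ M))).card : ℝ) := by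
            exact_mod_cast card_le_card hsub
      _ ≤ ∑ G ∈ powersetCard x W,
          (((pm r (Icc 1 (r * n))).filter (fun M => G ⊆ M)).card : ℝ) := by
            exact_mod_cast card_biUnion_le
      _ ≤ ∑ G ∈ powersetCard x W, (p ^ x * nm r n) := by
          apply sum_le_sum
          intro G hG
          have := containing_bound hr n hn G
          rwa [(mem_powersetCard.1 hG).2] at this
      _ = _ := by simp [card_powersetCard]
  refine h1.trans ?_
  have h2 : (W.card.choose x : ℝ) ≤ (Real.exp 1 * W.card / x) ^ x := by
    have a := Nat.choose_le_pow_div (α := ℝ) x W.card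
    refine a.trans ?_
    rw [div_pow, mul_pow, div_le_div_iff₀ (by positivity) (by positivity)]
    have := pow_self_le x
    calc (W.card : ℝ) ^ x * (x : ℝ) ^ x ≤ (W.card : ℝ) ^ x * (Real.exp 1 ^ x * x.factorial) := by
          gcongr
      _ = _ := by ring
  calc (W.card.choose x : ℝ) * (p ^ x * nm r n)
      ≤ (Real.exp 1 * W.card / x) ^ x * (p ^ x * nm r n) := by gcongr
    _ = _ := by rw [← mul_assoc, ← mul_pow]; congr 2; ring

/-- Union bound version. -/
lemma tail_union {ι : Type*} {r : ℕ} (hr : 0 < r) (n : ℕ) (hn : 0 < n) (S : Finset ι)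
    (W : ι → Finset (Finset ℕ)) (w : ℝ) (hw : ∀ i ∈ S, ((W i).card : ℝ) ≤ w) (x : ℕ)
    (hx : 0 < x) :
    (((pm r (Icc 1 (r * n))).filter (fun M => ∃ i ∈ S, x ≤ (M ∩ W i).card)).card : ℝ) ≤
      S.card * (Real.exp 1 * w * (C0 r / (n : ℝ) ^ (r - 1)) / x) ^ x * nm r n := by
  have hC := C0_pos r
  have hsub : (pm r (Icc 1 (r * n))).filter (fun M => ∃ i ∈ S, x ≤ (M ∩ W i).card) ⊆
      S.biUnion (fun i => (pm r (Icc 1 (r * n))).filter (fun M => x ≤ (M ∩ W i).card)) := by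
    intro M hM
    obtain ⟨hM, i, hi, h⟩ := mem_filter.1 hM
    exact mem_biUnion.2 ⟨i, hi, mem_filter.2 ⟨hM, h⟩⟩
  calc _ ≤ ((S.biUnion (fun i => (pm r (Icc 1 (r * n))).filter
          (fun M => x ≤ (M ∩ W i).card))).card : ℝ) := by
            exact_mod_cast card_le_card hsub
      _ ≤ ∑ i ∈ S, (((pm r (Icc 1 (r * n))).filter (fun M => x ≤ (M ∩ W i).card)).card : ℝ) := by
            exact_mod_cast card_biUnion_le
      _ ≤ ∑ i ∈ S, ((Real.exp 1 * w * (C0 r / (n : ℝ) ^ (r - 1)) / x) ^ x * nm r n) := by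
          apply sum_le_sum
          intro i hi
          refine (tail_bound hr n hn (W i) x hx).trans ?_
          gcongr
          exact hw i hi
      _ = _ := by simp [mul_assoc]

set_option maxHeartbeats 2000000 in
/-- Second moment method. -/
lemma second_moment {r : ℕ} (hr : 0 < r) (n : ℕ) (hn : 3 ≤ n) (U : Finset (Finset ℕ))
    (hU : ∀ e ∈ U, e ⊆ Icc 1 (r * n) ∧ e.card = r) (hU0 : U.Nonempty) :
    (((pm r (Icc 1 (r * n))).filter
      (fun M => ((M ∩ U).card : ℝ) < U.card * (n / (r * n).choose r) / 2)).card : ℝ) ≤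
      4 * (1 / (U.card * (n / (r * n).choose r)) + (((n : ℝ) / (n - 2)) ^ r - 1)) * nm r n := by
  set Ω := pm r (Icc 1 (r * n)) with hΩ
  have hΩc : Ω.card = nm r n := rfl
  set p : ℝ := n / (r * n).choose r with hp
  set N : ℝ := (nm r n : ℝ) with hN
  have hN0 : 0 < N := by rw [hN]; exact_mod_cast nm_pos hr n
  have hnr : (0 : ℝ) < n := by positivity
  have hle : r ≤ r * n := Nat.le_mul_of_pos_right r (by omega)
  have hch : (0 : ℝ) < (r * n).choose r := by exact_mod_cast Nat.choose_pos hle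
  have hp0 : 0 < p := by positivity
  have hUc : (0 : ℝ) < U.card := by exact_mod_cast hU0.card_pos
  set μ : ℝ := U.card * p with hμ
  have hμ0 : 0 < μ := by positivity
  set δ : ℝ := ((n : ℝ) / (n - 2)) ^ r - 1 with hδ
  -- first moment
  have r1 : (nm r (n - 1) : ℝ) = p * N := by
    have h := nm_succ hr (n - 1)
    rw [show n - 1 + 1 = n by omega] at h
    have h : (n : ℝ) * N = (r * n).choose r * nm r (n - 1) := by rw [hN]; exact_mod_cast h
    rw [hp]
    field_simp
    linarith
  have q1 : ∀ e ∈ U, ((Ω.filter (fun M => e ∈ M)).card : ℝ) = p * N := by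
    intro e he
    rw [card_containing_one hr _ e (hU e he).1 (hU e he).2, ← r1, pm_card_eq hr (n - 1)]
    rw [card_sdiff_of_subset (hU e he).1, (hU e he).2, Nat.mul_sub]
    simp
  have r2 : (nm r (n - 2) : ℝ) ≤ (1 + δ) * p ^ 2 * N := by
    have h := nm_succ hr (n - 2)
    rw [show n - 2 + 1 = n - 1 by omega] at h
    have h : ((n - 1 : ℕ) : ℝ) * nm r (n - 1) = (r * (n - 1)).choose r * nm r (n - 2) := by
      exact_mod_cast h
    rw [r1] at h
    have hle2 : r ≤ r * (n - 1) := Nat.le_mul_of_pos_right r (by omega)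
    have hch2 : (0 : ℝ) < (r * (n - 1)).choose r := by exact_mod_cast Nat.choose_pos hle2
    have h5 : ((r * n).choose r : ℝ) * ((n : ℝ) - 2) ^ r ≤ (r * (n - 1)).choose r * (n : ℝ) ^ r := by
      have a1 := Nat.descFactorial_le_pow (r * n) r
      have a2 := Nat.pow_sub_le_descFactorial (r * (n - 1)) r
      rw [Nat.descFactorial_eq_factorial_mul_choose] at a1 a2
      have a3 : (r * (n - 2)) ^ r ≤ r.factorial * (r * (n - 1)).choose r := by
        refine le_trans (Nat.pow_le_pow_left ?_ r) a2
        have : r * (n - 1) = r * (n - 2) + r := by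
          rw [← Nat.mul_succ]; congr 1; omega
        omega
      have a3' : (r * ((n : ℝ) - 2)) ^ r ≤ r.factorial * (r * (n - 1)).choose r := by
        have : ((n - 2 : ℕ) : ℝ) = (n : ℝ) - 2 := by
          rw [Nat.cast_sub (by omega)]; norm_num
        rw [← this]
        exact_mod_cast a3
      have a1' : (r.factorial : ℝ) * (r * n).choose r ≤ (r * (n : ℝ)) ^ r := by exact_mod_cast a1
      have hf : (0 : ℝ) < r.factorial * r ^ r := by
        have : (0 : ℝ) < r := by exact_mod_cast hr
        positivity
      have hn2 : (0 : ℝ) ≤ (n : ℝ) - 2 := by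
        have : (3 : ℝ) ≤ n := by exact_mod_cast hn
        linarith
      refine le_of_mul_le_mul_left ?_ hf
      calc (r.factorial : ℝ) * r ^ r * (((r * n).choose r : ℝ) * ((n : ℝ) - 2) ^ r)
          = (r.factorial * (r * n).choose r) * (r * ((n : ℝ) - 2)) ^ r := by rw [mul_pow]; ring
        _ ≤ (r * (n : ℝ)) ^ r * (r.factorial * (r * (n - 1)).choose r) := by gcongr
        _ = _ := by rw [mul_pow]; ring
    have hn2 : (0 : ℝ) < (n : ℝ) - 2 := by
      have : (3 : ℝ) ≤ n := by exact_mod_cast hn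
      linarith
    have h6 : ((n - 1 : ℕ) : ℝ) ≤ n := by exact_mod_cast Nat.sub_le n 1
    have h7 : ((r * n).choose r : ℝ) ≤ (1 + δ) * (r * (n - 1)).choose r := by
      rw [hδ, div_pow, add_sub_cancel, div_mul_eq_mul_div, le_div_iff₀ (by positivity)]
      linarith
    refine le_of_mul_le_mul_left ?_ hch2
    rw [← h]
    have e : p * (r * n).choose r = n := by rw [hp]; field_simp
    calc ((n - 1 : ℕ) : ℝ) * (p * N) ≤ n * (p * N) := by gcongr
      _ = p * (r * n).choose r * (p * N) := by rw [e]
      _ ≤ p * ((1 + δ) * (r * (n - 1)).choose r) * (p * N) := by gcongr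
      _ = _ := by ring
  have hδ0 : 0 ≤ δ := by
    have : (1 : ℝ) ≤ (n : ℝ) / (n - 2) := by
      have : (3 : ℝ) ≤ n := by exact_mod_cast hn
      rw [le_div_iff₀ (by linarith)]; linarith
    rw [hδ]
    have := one_le_pow₀ this (n := r)
    linarith
  have q2 : ∀ e ∈ U, ∀ f ∈ U, e ≠ f →
      ((Ω.filter (fun M => e ∈ M ∧ f ∈ M)).card : ℝ) ≤ (1 + δ) * p ^ 2 * N := by
    intro e he f hf hne
    by_cases hd : Disjoint e f
    · refine le_trans ?_ r2
      have := card_containing_le (r := r) (Icc 1 (r * n)) {e, f}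
      rw [pm_card_eq hr (n - 2)] at this
      · refine le_trans ?_ (Nat.cast_le.2 this)
        apply le_of_eq
        congr 3
        ext M
        simp [insert_subset_iff]
      · rw [card_sdiff_of_subset]
        · simp only [biUnion_insert, id, singleton_biUnion]
          rw [card_union_of_disjoint hd, (hU e he).2, (hU f hf).2, Nat.mul_sub]
          simp; omega
        · simp only [biUnion_insert, id, singleton_biUnion]
          exact union_subset (hU e he).1 (hU f hf).1
    · have : Ω.filter (fun M => e ∈ M ∧ f ∈ M) = ∅ := by
        apply filter_eq_empty_iff.2
        rintro M hM ⟨h1, h2⟩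
        exact hd ((mem_pm.1 hM).2.1 e h1 f h2 hne)
      rw [this]
      simp
      positivity
  have ind : ∀ M : Finset (Finset ℕ), ((M ∩ U).card : ℝ) = ∑ e ∈ U, if e ∈ M then (1 : ℝ) else 0 := by
    intro M
    rw [← sum_filter, sum_const, nsmul_eq_mul, mul_one]
    congr 2
    ext e; simp [and_comm]
  have s1 : ∑ M ∈ Ω, ((M ∩ U).card : ℝ) = μ * N := by
    simp_rw [ind]
    rw [sum_comm]
    rw [sum_congr rfl (g := fun _ => p * N)]
    · simp [hμ, mul_assoc]
    · intro e he
      rw [← q1 e he, ← sum_filter, sum_const, nsmul_eq_mul, mul_one]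
  have s2 : ∑ M ∈ Ω, ((M ∩ U).card : ℝ) ^ 2 ≤ (μ + (1 + δ) * μ ^ 2) * N := by
    have : ∀ M ∈ Ω, ((M ∩ U).card : ℝ) ^ 2 =
        ∑ e ∈ U, ∑ f ∈ U, if e ∈ M ∧ f ∈ M then (1 : ℝ) else 0 := by
      intro M _
      rw [ind, sq, sum_mul_sum]
      refine sum_congr rfl fun e _ => sum_congr rfl fun f _ => ?_
      by_cases h1 : e ∈ M <;> by_cases h2 : f ∈ M <;> simp [h1, h2]
    rw [sum_congr rfl this, sum_comm]
    calc ∑ e ∈ U, ∑ M ∈ Ω, ∑ f ∈ U, (if e ∈ M ∧ f ∈ M then (1 : ℝ) else 0)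
        ≤ ∑ e ∈ U, (p * N + U.card * ((1 + δ) * p ^ 2 * N)) := by
          apply sum_le_sum
          intro e he
          rw [sum_comm]
          calc ∑ f ∈ U, ∑ M ∈ Ω, (if e ∈ M ∧ f ∈ M then (1 : ℝ) else 0)
              ≤ ∑ f ∈ U, ((if f = e then p * N else 0) + (1 + δ) * p ^ 2 * N) := by
                apply sum_le_sum
                intro f hf
                have hc : ∑ M ∈ Ω, (if e ∈ M ∧ f ∈ M then (1 : ℝ) else 0) =
                    (Ω.filter (fun M => e ∈ M ∧ f ∈ M)).card := by
                  rw [← sum_filter, sum_const, nsmul_eq_mul, mul_one]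
                rw [hc]
                by_cases hfe : f = e
                · subst hfe
                  simp only [and_self, if_true]
                  rw [q1 f hf]
                  have : 0 ≤ (1 + δ) * p ^ 2 * N := by positivity
                  linarith
                · rw [if_neg hfe, zero_add]
                  exact q2 e he f hf (Ne.symm hfe)
            _ = _ := by rw [sum_add_distrib]; simp [he]
      _ = _ := by rw [sum_const, nsmul_eq_mul, hμ]; ring
  have s3 : ∑ M ∈ Ω, (((M ∩ U).card : ℝ) - μ) ^ 2 ≤ (μ + δ * μ ^ 2) * N := by
    have : ∑ M ∈ Ω, (((M ∩ U).card : ℝ) - μ) ^ 2 =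
        ∑ M ∈ Ω, ((M ∩ U).card : ℝ) ^ 2 - 2 * μ * ∑ M ∈ Ω, ((M ∩ U).card : ℝ) + μ ^ 2 * N := by
      rw [mul_sum, ← sum_sub_distrib]
      rw [show μ ^ 2 * N = ∑ M ∈ Ω, μ ^ 2 by rw [sum_const, nsmul_eq_mul, hΩc]; ring]
      rw [← sum_add_distrib]
      exact sum_congr rfl fun M _ => by ring
    rw [this, s1]
    nlinarith [s2]
  have s4 : ((Ω.filter (fun M => ((M ∩ U).card : ℝ) < μ / 2)).card : ℝ) * (μ / 2) ^ 2 ≤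
      ∑ M ∈ Ω, (((M ∩ U).card : ℝ) - μ) ^ 2 := by
    calc _ = ∑ M ∈ Ω.filter (fun M => ((M ∩ U).card : ℝ) < μ / 2), (μ / 2) ^ 2 := by
          rw [sum_const, nsmul_eq_mul]
      _ ≤ ∑ M ∈ Ω.filter (fun M => ((M ∩ U).card : ℝ) < μ / 2), (((M ∩ U).card : ℝ) - μ) ^ 2 := by
          apply sum_le_sum
          intro M hM
          have := (mem_filter.1 hM).2
          nlinarith
      _ ≤ _ := sum_le_sum_of_subset_of_nonneg (filter_subset _ _) (fun _ _ _ => sq_nonneg _)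
  have h9 : (0 : ℝ) < (μ / 2) ^ 2 := by positivity
  refine le_of_mul_le_mul_right ((s4.trans s3).trans (le_of_eq ?_)) h9
  field_simp
  ring

/-- Cell index of an integer. -/
def qcell {m : ℕ} (hm : 0 < m) (L x : ℕ) : Fin m := ⟨min (x / L) (m - 1), by omega⟩

lemma qcell_lt {m : ℕ} (hm : 0 < m) (L x y : ℕ) (h : qcell hm L x < qcell hm L y) : x < y := by
  by_contra hxy
  push Not at hxy
  have h1 : y / L ≤ x / L := Nat.div_le_div_right hxy
  have h2 : min (x / L) (m - 1) < min (y / L) (m - 1) := h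
  omega

/-- Signed cell of an edge. -/
noncomputable def ecell {r m : ℕ} (hm : 0 < m) (L : ℕ) (s : Fin r → Bool) (e : Finset ℕ) :
    Fin r → Fin m :=
  fun i => if s i then qcell hm L (vec r e i) else (qcell hm L (vec r e i)).rev

lemma ecell_lt {r m : ℕ} (hm : 0 < m) (L : ℕ) (s : Fin r → Bool) (e f : Finset ℕ)
    (h : ∀ i, ecell hm L s e i < ecell hm L s f i) : SLt s (vec r e) (vec r f) := by
  intro i
  have hi := h i
  simp only [ecell] at hi
  split_ifs at hi ⊢
  · exact qcell_lt hm L _ _ hi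
  · exact qcell_lt hm L _ _ (Fin.rev_lt_rev.1 hi)

/-- The boundary of a set of cells. -/
noncomputable def bdry {r m : ℕ} (D : Finset (Fin r → Fin m)) : Finset (Fin r → Fin m) :=
  D.filter (fun c => ¬ ∃ c' ∈ D, ∀ i, c i < c' i)

lemma card_coord_zero {r m : ℕ} (hm : 0 < m) (i : Fin r) :
    (univ.filter (fun v : Fin r → Fin m => v i = ⟨0, hm⟩)).card ≤ m ^ (r - 1) := by
  obtain ⟨k, rfl⟩ : ∃ k, r = k + 1 := ⟨r - 1, by have := i.2; omega⟩
  have : (univ : Finset (Fin k → Fin m)).card = m ^ (k + 1 - 1) := by simp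
  rw [← this]
  apply card_le_card_of_injOn (fun v => i.removeNth v)
  · intro v _; simp
  · intro v hv w hw h
    have hv := (mem_filter.1 (mem_coe.1 hv)).2
    have hw := (mem_filter.1 (mem_coe.1 hw)).2
    dsimp only at h
    rw [← Fin.insertNth_self_removeNth i v, ← Fin.insertNth_self_removeNth i w, hv, hw, h]

lemma card_bdry {r m : ℕ} (hr : 0 < r) (hm : 0 < m) (D : Finset (Fin r → Fin m)) :
    (bdry D).card ≤ r * m ^ (r - 1) := by
  have hne : (univ : Finset (Fin r)).Nonempty := ⟨⟨0, hr⟩, mem_univ _⟩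
  let mn : (Fin r → Fin m) → ℕ := fun c => univ.inf' hne (fun i => (c i : ℕ))
  have mn_le : ∀ c i, mn c ≤ c i := fun c i => inf'_le _ (mem_univ i)
  have mn_eq : ∀ c, ∃ i, mn c = c i := by
    intro c
    obtain ⟨i, -, hi⟩ := exists_mem_eq_inf' hne (fun i => (c i : ℕ))
    exact ⟨i, hi⟩
  let T : Finset (Fin r → Fin m) :=
    univ.biUnion (fun i : Fin r => univ.filter (fun v : Fin r → Fin m => v i = ⟨0, hm⟩))
  have hT : T.card ≤ r * m ^ (r - 1) := by
    refine card_biUnion_le.trans ?_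
    refine (sum_le_sum (fun i _ => card_coord_zero hm i)).trans ?_
    simp
  refine le_trans ?_ hT
  apply card_le_card_of_injOn
    (fun c => fun i => (⟨c i - mn c, by have := (c i).2; omega⟩ : Fin m))
  · intro c _
    obtain ⟨i, hi⟩ := mn_eq c
    simp only [T, coe_biUnion, Set.mem_iUnion]
    refine ⟨i, by simp, ?_⟩
    simp [hi]
  · have key : ∀ c ∈ bdry D, ∀ d ∈ bdry D, (∀ i, (c i : ℕ) - mn c = d i - mn d) → ¬ mn c < mn d := by
      intro c hc d hd h hlt
      refine (mem_filter.1 hc).2 ⟨d, (mem_filter.1 hd).1, fun i => ?_⟩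
      have := h i
      have := mn_le c i
      have := mn_le d i
      show (c i : ℕ) < d i
      omega
    intro c hc d hd h
    have h' : ∀ i, (c i : ℕ) - mn c = d i - mn d := by
      intro i
      have := congrArg Fin.val (congrFun h i)
      simpa using this
    have k1 := key c hc d hd h'
    have k2 := key d hd c hc (fun i => (h' i).symm)
    funext i
    apply Fin.ext
    have := h' i
    have := mn_le c i
    have := mn_le d i
    omega

/-- heights of a set of cells -/
noncomputable def hgt {k m : ℕ} (D : Finset (Fin (k + 2) → Fin m)) (c : Fin k → Fin m) (i : Fin m) :
    ℕ := (univ.filter (fun x : Fin m => (Fin.cons x (Fin.cons i c : Fin (k + 1) → Fin m) :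
      Fin (k + 2) → Fin m) ∈ D)).card

lemma hgt_le {k m : ℕ} (D : Finset (Fin (k + 2) → Fin m)) (c : Fin k → Fin m) (i : Fin m) :
    hgt D c i ≤ m := (card_le_univ _).trans (by simp)

lemma hgt_anti {k m : ℕ} {D : Finset (Fin (k + 2) → Fin m)}
    (hD : IsLowerSet (D : Set (Fin (k + 2) → Fin m))) (c : Fin k → Fin m) {i j : Fin m}
    (hij : i ≤ j) : hgt D c j ≤ hgt D c i := by
  apply card_le_card
  intro x hx
  rw [mem_filter] at hx ⊢
  refine ⟨mem_univ _, hD ?_ hx.2⟩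
  rw [Fin.cons_le_cons]
  refine ⟨le_rfl, ?_⟩
  rw [Fin.cons_le_cons]
  exact ⟨hij, le_rfl⟩

lemma mem_iff_hgt {k m : ℕ} {D : Finset (Fin (k + 2) → Fin m)}
    (hD : IsLowerSet (D : Set (Fin (k + 2) → Fin m))) (c : Fin k → Fin m) (i x : Fin m) :
    (Fin.cons x (Fin.cons i c : Fin (k + 1) → Fin m) : Fin (k + 2) → Fin m) ∈ D ↔
      (x : ℕ) < hgt D c i := by
  have low : ∀ y z : Fin m, y ≤ z →
      (Fin.cons z (Fin.cons i c : Fin (k + 1) → Fin m) : Fin (k + 2) → Fin m) ∈ D →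
      (Fin.cons y (Fin.cons i c : Fin (k + 1) → Fin m) : Fin (k + 2) → Fin m) ∈ D := by
    intro y z hyz hz
    refine hD ?_ hz
    rw [Fin.cons_le_cons]
    exact ⟨hyz, le_rfl⟩
  constructor
  · intro hx
    have : (Iic x).card ≤ hgt D c i := by
      apply card_le_card
      intro y hy
      rw [mem_filter]
      exact ⟨mem_univ _, low y x (mem_Iic.1 hy) hx⟩
    rw [Fin.card_Iic] at this
    omega
  · intro hlt
    by_contra hx
    have : hgt D c i ≤ (Iio x).card := by
      apply card_le_card
      intro y hy
      rw [mem_filter] at hy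
      rw [mem_Iio]
      by_contra hxy
      exact hx (low x y (not_lt.1 hxy) hy.2)
    rw [Fin.card_Iio] at this
    omega

lemma card_lower {r m : ℕ} (hr : 2 ≤ r) :
    (univ.filter (fun D : Finset (Fin r → Fin m) => IsLowerSet (D : Set (Fin r → Fin m)))).card
      ≤ 4 ^ (m ^ (r - 1)) := by
  obtain ⟨k, rfl⟩ : ∃ k, r = k + 2 := ⟨r - 2, by omega⟩
  have hc : (univ : Finset ((Fin k → Fin m) → Finset (Fin (2 * m)))).card
      = 4 ^ (m ^ (k + 2 - 1)) := by
    simp only [card_univ, Fintype.card_fun, Fintype.card_finset, Fintype.card_fin]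
    rw [pow_mul, ← pow_mul, show k + 2 - 1 = k + 1 by omega, pow_succ, mul_comm]
    norm_num
    ring
  rw [← hc]
  have smono : ∀ D : Finset (Fin (k + 2) → Fin m), IsLowerSet (D : Set (Fin (k + 2) → Fin m)) →
      ∀ c, StrictMono (fun i : Fin m => (⟨m + i - hgt D c i, by have := i.2; omega⟩ : Fin (2 * m))) := by
    intro D hD c i j hij
    have h1 := hgt_anti hD c hij.le
    have h2 := hgt_le D c i
    have h3 : (i : ℕ) < j := hij
    show m + (i : ℕ) - hgt D c i < m + j - hgt D c j
    omega
  apply card_le_card_of_injOn (fun D => fun c => univ.image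
    (fun i : Fin m => (⟨m + i - hgt D c i, by have := i.2; omega⟩ : Fin (2 * m))))
  · intro D _; simp
  · intro D hD E hE h
    have hD := (mem_filter.1 (mem_coe.1 hD)).2
    have hE := (mem_filter.1 (mem_coe.1 hE)).2
    have hh : ∀ c i, hgt D c i = hgt E c i := by
      intro c i
      have h1 := congrFun h c
      have h2 := congrArg (fun s : Finset (Fin (2 * m)) => (s : Set (Fin (2 * m)))) h1
      simp only [coe_image, coe_univ, Set.image_univ] at h2
      have h3 := ((smono D hD c).range_inj (smono E hE c)).1 h2
      have h4 := congrArg Fin.val (congrFun h3 i)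
      simp only at h4
      have := hgt_le D c i
      have := hgt_le E c i
      omega
    ext v
    rw [← Fin.cons_self_tail v, ← Fin.cons_self_tail (Fin.tail v), mem_iff_hgt hD, mem_iff_hgt hE, hh]

/-- Edges whose cell lies in the boundary of `D`. -/
noncomputable def region {r m : ℕ} (hm : 0 < m) (n L : ℕ) (s : Fin r → Bool)
    (D : Finset (Fin r → Fin m)) : Finset (Finset ℕ) :=
  (powersetCard r (Icc 1 (r * n))).filter (fun e => ecell hm L s e ∈ bdry D)

lemma card_fiber {r m : ℕ} (hm : 0 < m) (n L : ℕ) (hL : r * n < m * L) (s : Fin r → Bool)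
    (c : Fin r → Fin m) :
    ((powersetCard r (Icc 1 (r * n))).filter (fun e => ecell hm L s e = c)).card ≤ L ^ r := by
  let a : Fin r → ℕ := fun i => if s i then (c i : ℕ) else (c i).rev
  have : (Fintype.piFinset (fun i : Fin r => Ico (a i * L) (a i * L + L))).card = L ^ r := by
    simp
  rw [← this]
  apply card_le_card_of_injOn (fun e => vec r e)
  · intro e he
    obtain ⟨he, hce⟩ := mem_filter.1 (mem_coe.1 he)
    obtain ⟨hsub, hcard⟩ := mem_powersetCard.1 he
    rw [mem_coe, Fintype.mem_piFinset]
    intro i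
    have h1 := mem_Icc.1 (hsub (vec_mem hcard i))
    have hL0 : 0 < L := by
      rcases Nat.eq_zero_or_pos L with h | h
      · subst h; omega
      · exact h
    have h2 : vec r e i / L < m := by
      rw [Nat.div_lt_iff_lt_mul hL0]; omega
    have h3 : (qcell hm L (vec r e i) : ℕ) = vec r e i / L := by
      simp only [qcell]; omega
    have h4 : vec r e i / L = a i := by
      have h5 := congrFun hce i
      simp only [ecell] at h5
      simp only [a]
      rw [← h3]
      split_ifs at h5 ⊢
      · rw [h5]
      · rw [← h5, Fin.rev_rev]
    change vec r e i ∈ _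
    rw [mem_Ico, ← h4]
    have := Nat.div_add_mod (vec r e i) L
    have := Nat.mod_lt (vec r e i) hL0
    rw [mul_comm (vec r e i / L) L]
    omega
  · intro e he f hf h
    have he := (mem_powersetCard.1 (mem_filter.1 (mem_coe.1 he)).1).2
    have hf := (mem_powersetCard.1 (mem_filter.1 (mem_coe.1 hf)).1).2
    rw [← image_vec he, ← image_vec hf]
    exact congrArg (fun v => univ.image v) h

lemma card_region {r m : ℕ} (hr : 0 < r) (hm : 0 < m) (n L : ℕ) (hL : r * n < m * L)
    (s : Fin r → Bool) (D : Finset (Fin r → Fin m)) :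
    (region hm n L s D).card ≤ r * m ^ (r - 1) * L ^ r := by
  have : region hm n L s D ⊆ (bdry D).biUnion (fun c =>
      (powersetCard r (Icc 1 (r * n))).filter (fun e => ecell hm L s e = c)) := by
    intro e he
    obtain ⟨h1, h2⟩ := mem_filter.1 he
    exact mem_biUnion.2 ⟨_, h2, mem_filter.2 ⟨h1, rfl⟩⟩
  refine (card_le_card this).trans (card_biUnion_le.trans ?_)
  refine (sum_le_sum (fun c _ => card_fiber hm n L hL s c)).trans ?_
  rw [sum_const, smul_eq_mul]
  exact Nat.mul_le_mul_right _ (card_bdry hr hm D)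

lemma clique_in_region {r m : ℕ} (hr : 0 < r) (hm : 0 < m) (n L : ℕ)
    (s : Fin r → Bool) (Ps : Finset (Finset (Finset ℕ)))
    (hPs : ∀ P ∈ Ps, IsPartitePattern r P) (hs : signPat r s ∉ Ps)
    {M K : Finset (Finset ℕ)} (hM : M ∈ pm r (Icc 1 (r * n))) (hK : K ⊆ M)
    (hc : IsClique r ↑Ps K) :
    ∃ D ∈ univ.filter (fun D : Finset (Fin r → Fin m) => IsLowerSet (D : Set (Fin r → Fin m))),
      K.card ≤ (M ∩ region hm n L s D).card := by
  refine ⟨univ.filter (fun c => ∃ e ∈ K, c ≤ ecell hm L s e), ?_, ?_⟩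
  · rw [mem_filter]
    refine ⟨mem_univ _, ?_⟩
    intro c d hdc hcm
    simp only [coe_filter, mem_univ, true_and, Set.mem_ofPred_eq] at hcm ⊢
    obtain ⟨e, he, hce⟩ := hcm
    exact ⟨e, he, hdc.trans hce⟩
  · apply card_le_card
    intro e he
    rw [mem_inter]
    refine ⟨hK he, mem_filter.2 ⟨?_, mem_filter.2 ⟨?_, ?_⟩⟩⟩
    · rw [mem_powersetCard]
      obtain ⟨h1, h2, h3⟩ := mem_pm.1 hM
      refine ⟨?_, h1 e (hK he)⟩
      rw [← h3]
      exact subset_biUnion_of_mem id (hK he)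
    · exact mem_filter.2 ⟨mem_univ _, e, he, le_rfl⟩
    · rintro ⟨c', hc', hlt⟩
      obtain ⟨-, f, hf, hcf⟩ := mem_filter.1 hc'
      have hlt' : ∀ i, ecell hm L s e i < ecell hm L s f i := fun i => (hlt i).trans_le (hcf i)
      have hne : e ≠ f := by
        rintro rfl
        exact lt_irrefl _ (hlt' ⟨0, hr⟩)
      obtain ⟨P, hP, hform⟩ := hc.2.2 e he f hf hne
      obtain ⟨t, rfl⟩ := partite_eq_signPat (hPs P hP)
      have := forms_signPat hr (hc.1 e he) (hc.1 f hf) hform (ecell_lt hm L s e f hlt')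
      rw [this] at hP
      exact hs hP

/-- Upper bound in finite form. -/
lemma upper_finite {r m : ℕ} (hr : 2 ≤ r) (hm : 0 < m) (n L : ℕ) (hn : 0 < n)
    (hL : r * n < m * L) (Ps : Finset (Finset (Finset ℕ)))
    (hPs : ∀ P ∈ Ps, IsPartitePattern r P) (s : Fin r → Bool) (hs : signPat r s ∉ Ps)
    (x : ℕ) (hx : 0 < x) :
    (((pm r (Icc 1 (r * n))).filter (fun M => x ≤ zClique r ↑Ps M)).card : ℝ) ≤
      4 ^ (m ^ (r - 1)) * (Real.exp 1 * (r * m ^ (r - 1) * L ^ r : ℝ) *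
        (C0 r / (n : ℝ) ^ (r - 1)) / x) ^ x * nm r n := by
  have hC := C0_pos r
  have h := tail_union (by omega : 0 < r) n hn
    (univ.filter (fun D : Finset (Fin r → Fin m) => IsLowerSet (D : Set (Fin r → Fin m))))
    (region hm n L s) (r * m ^ (r - 1) * L ^ r : ℝ)
    (fun D _ => by exact_mod_cast card_region (by omega) hm n L hL s D) x hx
  refine le_trans ?_ (h.trans ?_)
  · apply Nat.cast_le.2
    apply card_le_card
    intro M hM
    obtain ⟨hM, hz⟩ := mem_filter.1 hM
    obtain ⟨K, hK, hc, hcard⟩ := exists_zClique r (↑Ps) M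
    obtain ⟨D, hD, hle⟩ := clique_in_region (by omega) hm n L s Ps hPs hs hM hK hc
    exact mem_filter.2 ⟨hM, D, hD, by omega⟩
  · gcongr
    exact_mod_cast card_lower hr

/-- Unsigned cell coordinates on the antichain of cells. -/
def cvec {k m : ℕ} (d : Fin k → Fin m) : Fin (k + 1) → ℕ :=
  Fin.cons (k * m - ∑ i, (d i : ℕ)) (fun i => (d i : ℕ))

lemma sum_d_le {k m : ℕ} (d : Fin k → Fin m) : ∑ i, (d i : ℕ) ≤ k * m := by
  calc ∑ i, (d i : ℕ) ≤ ∑ _i : Fin k, m := sum_le_sum (fun i _ => (d i).2.le)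
    _ = _ := by simp

lemma sum_cvec {k m : ℕ} (d : Fin k → Fin m) : ∑ i, cvec d i = k * m := by
  rw [Fin.sum_univ_succ]
  simp only [cvec, Fin.cons_zero, Fin.cons_succ]
  have := sum_d_le d
  omega

lemma cvec_lt {k m : ℕ} (hm : 0 < m) (d : Fin k → Fin m) (i : Fin (k + 1)) :
    cvec d i < (k + 1) * m := by
  have h : (k + 1) * m = k * m + m := by ring
  rw [h]
  refine Fin.cases ?_ (fun i => ?_) i
  · simp only [cvec, Fin.cons_zero]
    omega
  · simp only [cvec, Fin.cons_succ]
    have := (d i).2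
    have : 0 ≤ k * m := Nat.zero_le _
    omega

lemma cvec_inj {k m : ℕ} {d d' : Fin k → Fin m} (h : cvec d = cvec d') : d = d' := by
  have := (Fin.cons_injective2 h).2
  funext i
  exact Fin.ext (congrFun this i)

lemma cvec_le_eq {k m : ℕ} {d d' : Fin k → Fin m} (h : ∀ i, cvec d i ≤ cvec d' i) : d = d' := by
  apply cvec_inj
  have h1 : ∑ i, cvec d i = ∑ i, cvec d' i := by rw [sum_cvec, sum_cvec]
  have := (sum_eq_sum_iff_of_le (fun i _ => h i)).1 h1
  funext i
  exact this i (mem_univ i)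

/-- Signed cell coordinates. -/
def jvec {k m : ℕ} (s : Fin (k + 1) → Bool) (d : Fin k → Fin m) (i : Fin (k + 1)) : ℕ :=
  if s i then cvec d i else (k + 1) * m - 1 - cvec d i

lemma jvec_lt {k m : ℕ} (hm : 0 < m) (s : Fin (k + 1) → Bool) (d : Fin k → Fin m)
    (i : Fin (k + 1)) : jvec s d i < (k + 1) * m := by
  have := cvec_lt hm d i
  unfold jvec
  split_ifs <;> omega

/-- Coordinates of the edge. -/
def xvec {k m L : ℕ} (s : Fin (k + 1) → Bool) (d : Fin k → Fin m) (t : Fin (k + 1) → Fin L)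
    (i : Fin (k + 1)) : ℕ := L * (i * ((k + 1) * m) + jvec s d i + 1) + t i

lemma xvec_div {k m L : ℕ} (s : Fin (k + 1) → Bool) (d : Fin k → Fin m) (t : Fin (k + 1) → Fin L)
    (i : Fin (k + 1)) : xvec s d t i / L = i * ((k + 1) * m) + jvec s d i + 1 := by
  have hL : 0 < L := by have := (t i).2; omega
  rw [xvec, Nat.mul_add_div hL, Nat.div_eq_of_lt (t i).2, add_zero]

lemma xvec_lt {k m L : ℕ} (hm : 0 < m) (s : Fin (k + 1) → Bool) (d d' : Fin k → Fin m)
    (t t' : Fin (k + 1) → Fin L) {i j : Fin (k + 1)} (hij : i < j) :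
    xvec s d t i < xvec s d' t' j := by
  by_contra h
  push Not at h
  have h1 : xvec s d' t' j / L ≤ xvec s d t i / L := Nat.div_le_div_right h
  rw [xvec_div, xvec_div] at h1
  have h2 := jvec_lt hm s d i
  have h3 : (i : ℕ) + 1 ≤ j := hij
  have h4 : ((i : ℕ) + 1) * ((k + 1) * m) ≤ j * ((k + 1) * m) := Nat.mul_le_mul_right _ h3
  rw [add_mul, one_mul] at h4
  omega

lemma xvec_mem {k m L n : ℕ} (hm : 0 < m) (hL : L * ((k + 1) * ((k + 1) * m) + 1) ≤ (k + 1) * n)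
    (s : Fin (k + 1) → Bool) (d : Fin k → Fin m) (t : Fin (k + 1) → Fin L) (i : Fin (k + 1)) :
    xvec s d t i ∈ Icc 1 ((k + 1) * n) := by
  have hL0 : 0 < L := by have := (t i).2; omega
  have h0 := xvec_div s d t i
  rw [mem_Icc]
  constructor
  · by_contra h
    have : xvec s d t i = 0 := by omega
    rw [this] at h0
    simp at h0
  · refine le_trans (le_of_lt ?_) hL
    rw [mul_comm L, ← Nat.div_lt_iff_lt_mul hL0, h0]
    have h2 := jvec_lt hm s d i
    have h3 : (i : ℕ) + 1 ≤ k + 1 := i.2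
    have h4 : ((i : ℕ) + 1) * ((k + 1) * m) ≤ (k + 1) * ((k + 1) * m) := Nat.mul_le_mul_right _ h3
    rw [add_mul, one_mul] at h4
    omega

lemma jvec_of_xvec {k m L : ℕ} (s : Fin (k + 1) → Bool) {d d' : Fin k → Fin m}
    {t t' : Fin (k + 1) → Fin L} {i : Fin (k + 1)} (h : xvec s d t i ≤ xvec s d' t' i) :
    jvec s d i ≤ jvec s d' i := by
  have h1 : xvec s d t i / L ≤ xvec s d' t' i / L := Nat.div_le_div_right h
  rw [xvec_div, xvec_div] at h1
  omega

lemma slt_eq {k m L : ℕ} (hm : 0 < m) (s : Fin (k + 1) → Bool) {d d' : Fin k → Fin m}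
    {t t' : Fin (k + 1) → Fin L} (h : SLt s (xvec s d t) (xvec s d' t')) : d = d' := by
  apply cvec_le_eq
  intro i
  have hi := h i
  have h1 := cvec_lt hm d i
  have h2 := cvec_lt hm d' i
  rcases hs : s i with _ | _
  · simp only [hs, Bool.false_eq_true, if_false] at hi
    have := jvec_of_xvec s hi.le
    simp only [jvec, hs, Bool.false_eq_true, if_false] at this
    omega
  · simp only [hs, if_true] at hi
    have := jvec_of_xvec s hi.le
    simpa only [jvec, hs, if_true] using this

/-- The edge. -/
def pedge {k m L : ℕ} (s : Fin (k + 1) → Bool) (d : Fin k → Fin m) (t : Fin (k + 1) → Fin L) :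
    Finset ℕ := univ.image (xvec s d t)

lemma xvec_mono {k m L : ℕ} (hm : 0 < m) (s : Fin (k + 1) → Bool) (d : Fin k → Fin m)
    (t : Fin (k + 1) → Fin L) : StrictMono (xvec s d t) := fun _ _ h => xvec_lt hm s d d t t h

lemma vec_pedge {k m L : ℕ} (hm : 0 < m) (s : Fin (k + 1) → Bool) (d : Fin k → Fin m)
    (t : Fin (k + 1) → Fin L) : vec (k + 1) (pedge s d t) = xvec s d t :=
  vec_unique (xvec_mono hm s d t)

lemma card_pedge {k m L : ℕ} (hm : 0 < m) (s : Fin (k + 1) → Bool) (d : Fin k → Fin m)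
    (t : Fin (k + 1) → Fin L) : (pedge s d t).card = k + 1 := by
  rw [pedge, card_image_of_injective _ (xvec_mono hm s d t).injective]
  simp

lemma pedge_inj {k m L : ℕ} (hm : 0 < m) (s : Fin (k + 1) → Bool) {d d' : Fin k → Fin m}
    {t t' : Fin (k + 1) → Fin L} (h : pedge s d t = pedge s d' t') : d = d' ∧ t = t' := by
  have hx : xvec s d t = xvec s d' t' := by rw [← vec_pedge hm, ← vec_pedge hm, h]
  have hj : ∀ i, jvec s d i = jvec s d' i := fun i =>
    le_antisymm (jvec_of_xvec s (congrFun hx i).le) (jvec_of_xvec s (congrFun hx i).ge)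
  constructor
  · apply cvec_inj
    funext i
    have h1 := cvec_lt hm d i
    have h2 := cvec_lt hm d' i
    have h3 := hj i
    unfold jvec at h3
    split_ifs at h3
    · exact h3
    · omega
  · funext i
    have := congrFun hx i
    simp only [xvec, hj i] at this
    exact Fin.ext (by omega)

/-- All edges in the cells of `D`. -/
noncomputable def cellEdges {k m : ℕ} (L : ℕ) (s : Fin (k + 1) → Bool)
    (D : Finset (Fin k → Fin m)) : Finset (Finset ℕ) :=
  (D ×ˢ (univ : Finset (Fin (k + 1) → Fin L))).image (fun p => pedge s p.1 p.2)

lemma card_cellEdges {k m : ℕ} (hm : 0 < m) (L : ℕ) (s : Fin (k + 1) → Bool)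
    (D : Finset (Fin k → Fin m)) : (cellEdges L s D).card = D.card * L ^ (k + 1) := by
  rw [cellEdges, card_image_of_injective, card_product]
  · simp
  · rintro ⟨d, t⟩ ⟨d', t'⟩ h
    obtain ⟨h1, h2⟩ := pedge_inj hm s h
    exact Prod.ext h1 h2

lemma hits_clique {k m L n : ℕ} (hm : 0 < m) (Ps : Finset (Finset (Finset ℕ)))
    (s : Fin (k + 1) → Bool)
    (hs : ∀ t, t ≠ s → (t ≠ fun i => !s i) → signPat (k + 1) t ∈ Ps)
    {M : Finset (Finset ℕ)} (hM : M ∈ pm (k + 1) (Icc 1 ((k + 1) * n))) :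
    ∃ D : Finset (Fin k → Fin m), D.card ≤ zClique (k + 1) ↑Ps M ∧
      M ∩ cellEdges L s (univ : Finset (Fin k → Fin m)) ⊆ M ∩ cellEdges L s D := by
  obtain ⟨m1, m2, m3⟩ := mem_pm.1 hM
  set D : Finset (Fin k → Fin m) :=
    univ.filter (fun d => ∃ t : Fin (k + 1) → Fin L, pedge s d t ∈ M) with hD
  have hch : ∀ d : Fin k → Fin m, ∃ e, d ∈ D → ∃ t : Fin (k + 1) → Fin L, e = pedge s d t ∧ e ∈ M := by
    intro d
    by_cases h : d ∈ D
    · obtain ⟨-, t, ht⟩ := mem_filter.1 h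
      exact ⟨_, fun _ => ⟨t, rfl, ht⟩⟩
    · exact ⟨∅, fun h' => (h h').elim⟩
  choose g hg using hch
  refine ⟨D, ?_, ?_⟩
  · have hinj : Set.InjOn g D := by
      intro d hd d' hd' h
      obtain ⟨t, ht, -⟩ := hg d hd
      obtain ⟨t', ht', -⟩ := hg d' hd'
      rw [ht, ht'] at h
      exact (pedge_inj hm s h).1
    rw [← card_image_of_injOn hinj]
    have hsub : D.image g ⊆ M := by
      intro e he
      obtain ⟨d, hd, rfl⟩ := mem_image.1 he
      obtain ⟨t, -, h⟩ := hg d hd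
      exact h
    apply le_zClique hsub
    refine ⟨fun e he => m1 e (hsub he), fun e he f hf => m2 e (hsub he) f (hsub hf), ?_⟩
    intro e he f hf hne
    have hdis := m2 e (hsub he) f (hsub hf) hne
    obtain ⟨d, hd, rfl⟩ := mem_image.1 he
    obtain ⟨d', hd', rfl⟩ := mem_image.1 hf
    obtain ⟨t, ht, -⟩ := hg d hd
    obtain ⟨t', ht', -⟩ := hg d' hd'
    have hdd : d ≠ d' := fun h => hne (by rw [h])
    rw [ht, ht'] at hdis ⊢
    have hform := forms_of_interleaved (card_pedge hm s d t) (card_pedge hm s d' t') hdis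
      (by intro i j hij; rw [vec_pedge hm, vec_pedge hm]; exact xvec_lt hm s d d' t t' hij)
      (by intro i j hij; rw [vec_pedge hm, vec_pedge hm]; exact xvec_lt hm s d' d t' t hij)
    rw [vec_pedge hm, vec_pedge hm] at hform
    refine ⟨_, ?_, hform⟩
    rw [mem_coe]
    apply hs
    · intro h
      apply hdd
      apply slt_eq hm s (t := t) (t' := t')
      intro i
      have hi := congrFun h i
      have hni : xvec s d t i ≠ xvec s d' t' i := by
        intro h
        exact disjoint_left.1 hdis (mem_image_of_mem _ (mem_univ i))
          (by rw [h]; exact mem_image_of_mem _ (mem_univ i))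
      rcases hsi : s i with _ | _
      · simp [hsi] at hi ⊢
        omega
      · simp [hsi] at hi ⊢
        omega
    · intro h
      apply hdd.symm
      apply slt_eq hm s (t := t') (t' := t)
      intro i
      have hi := congrFun h i
      have hni : xvec s d t i ≠ xvec s d' t' i := by
        intro h
        exact disjoint_left.1 hdis (mem_image_of_mem _ (mem_univ i))
          (by rw [h]; exact mem_image_of_mem _ (mem_univ i))
      rcases hsi : s i with _ | _
      · simp [hsi] at hi ⊢
        omega
      · simp [hsi] at hi ⊢
        omega
  · intro e he
    obtain ⟨h1, h2⟩ := mem_inter.1 he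
    refine mem_inter.2 ⟨h1, ?_⟩
    obtain ⟨⟨d, t⟩, -, rfl⟩ := mem_image.1 h2
    refine mem_image.2 ⟨(d, t), mem_product.2 ⟨mem_filter.2 ⟨mem_univ _, t, h1⟩, mem_univ _⟩, rfl⟩

/-- Lower bound in finite form. -/
lemma lower_finite {r m : ℕ} (hr : 2 ≤ r) (hm : 0 < m) (n L : ℕ) (hn : 3 ≤ n) (hL0 : 0 < L)
    (hL : L * (r * (r * m) + 1) ≤ r * n) (Ps : Finset (Finset (Finset ℕ)))
    (s : Fin r → Bool)
    (hs : ∀ t, t ≠ s → (t ≠ fun i => !s i) → signPat r t ∈ Ps)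
    (x : ℕ) (hx : 0 < x) (z μ : ℝ) (hz : 0 < z)
    (hμ : μ = (m ^ (r - 1) * L ^ r : ℝ) * (n / (r * n).choose r)) (hxμ : (x : ℝ) ≤ μ / 2) :
    (((pm r (Icc 1 (r * n))).filter (fun M => (zClique r ↑Ps M : ℝ) < z)).card : ℝ) ≤
      4 * (1 / μ + (((n : ℝ) / (n - 2)) ^ r - 1)) * nm r n +
      2 ^ (m ^ (r - 1)) * (Real.exp 1 * (z * L ^ r) *
        (C0 r / (n : ℝ) ^ (r - 1)) / x) ^ x * nm r n := by
  have hC := C0_pos r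
  obtain ⟨k, rfl⟩ : ∃ k, r = k + 1 := ⟨r - 1, by omega⟩
  simp only [Nat.add_sub_cancel] at hμ ⊢
  set U := cellEdges (k := k) (m := m) L s univ with hU
  have hUc : (U.card : ℝ) = (m ^ k * L ^ (k + 1) : ℝ) := by
    rw [hU, card_cellEdges hm]; simp
  have hUe : ∀ e ∈ U, e ⊆ Icc 1 ((k + 1) * n) ∧ e.card = k + 1 := by
    intro e he
    obtain ⟨⟨d, t⟩, -, rfl⟩ := mem_image.1 he
    refine ⟨?_, card_pedge hm s d t⟩
    intro y hy
    obtain ⟨i, -, rfl⟩ := mem_image.1 hy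
    exact xvec_mem hm hL s d t i
  have hU0 : U.Nonempty := by
    rw [← card_pos]
    have : (0 : ℝ) < U.card := by rw [hUc]; positivity
    exact_mod_cast this
  have h1 := second_moment (by omega) n hn U hUe hU0
  rw [hUc, ← hμ] at h1
  set S : Finset (Finset (Fin k → Fin m)) := univ.filter (fun D => (D.card : ℝ) ≤ z) with hS
  have h2 := tail_union (r := k + 1) (by omega) n (by omega) S (cellEdges L s) (z * L ^ (k + 1))
    (by
      intro D hD
      rw [card_cellEdges hm]
      push_cast
      gcongr
      exact (mem_filter.1 hD).2) x hx
  rw [Nat.add_sub_cancel] at h2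
  have hSc : (S.card : ℝ) ≤ 2 ^ (m ^ k) := by
    have : S.card ≤ 2 ^ (m ^ k) := by
      refine (card_le_univ S).trans ?_
      simp
    exact_mod_cast this
  have hsub : (pm (k + 1) (Icc 1 ((k + 1) * n))).filter (fun M => (zClique (k + 1) ↑Ps M : ℝ) < z) ⊆
      (pm (k + 1) (Icc 1 ((k + 1) * n))).filter (fun M => ((M ∩ U).card : ℝ) < μ / 2) ∪
      (pm (k + 1) (Icc 1 ((k + 1) * n))).filter
        (fun M => ∃ D ∈ S, x ≤ (M ∩ cellEdges L s D).card) := by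
    intro M hM
    obtain ⟨hM, hlt⟩ := mem_filter.1 hM
    rw [mem_union]
    by_cases hX : ((M ∩ U).card : ℝ) < μ / 2
    · exact Or.inl (mem_filter.2 ⟨hM, hX⟩)
    · right
      push Not at hX
      obtain ⟨D, hD, hDs⟩ := hits_clique (L := L) hm Ps s hs hM
      refine mem_filter.2 ⟨hM, D, mem_filter.2 ⟨mem_univ _, ?_⟩, ?_⟩
      · have : (D.card : ℝ) ≤ zClique (k + 1) ↑Ps M := by exact_mod_cast hD
        linarith
      · have a1 : (x : ℝ) ≤ (M ∩ U).card := hxμ.trans hX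
        have a2 : x ≤ (M ∩ U).card := by exact_mod_cast a1
        exact a2.trans (card_le_card hDs)
  calc _ ≤ ((_ ∪ _ : Finset _).card : ℝ) := by exact_mod_cast card_le_card hsub
    _ ≤ _ + _ := by exact_mod_cast card_union_le _ _
    _ ≤ _ := add_le_add h1 (h2.trans (by gcongr))

lemma root_setup {r : ℕ} (hr : 2 ≤ r) {n : ℕ} (hn : 1 ≤ n) :
    ∃ a : ℝ, 1 ≤ a ∧ a = (n : ℝ) ^ ((1 : ℝ) / r) ∧ a ^ r = n ∧
      (n : ℝ) ^ (1 - (1 : ℝ) / (r : ℝ)) = a ^ (r - 1) := by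
  have hn1 : (1 : ℝ) ≤ n := by exact_mod_cast hn
  have hn0 : (0 : ℝ) < n := by linarith
  have hr0 : (r : ℝ) ≠ 0 := by positivity
  refine ⟨(n : ℝ) ^ ((1 : ℝ) / r), Real.one_le_rpow hn1 (by positivity), rfl, ?_, ?_⟩
  · rw [← Real.rpow_natCast, ← Real.rpow_mul hn0.le, one_div, inv_mul_cancel₀ hr0, Real.rpow_one]
  · rw [← Real.rpow_natCast, ← Real.rpow_mul hn0.le, Nat.cast_sub (by omega)]
    congr 1
    field_simp
    simp

lemma pow_exp_bound {b T y : ℝ} (hb : 0 ≤ b) (hbT : b ≤ Real.exp (-T)) (hT : 0 ≤ T) {x : ℕ}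
    (hx : y ≤ x) : b ^ x ≤ Real.exp (-(T * y)) := by
  calc b ^ x ≤ Real.exp (-T) ^ x := pow_le_pow_left₀ hb hbT x
    _ = Real.exp (x * -T) := by rw [← Real.exp_nat_mul]
    _ ≤ _ := by
      apply Real.exp_le_exp.2
      nlinarith

lemma two_pow_exp (k : ℕ) : (2 : ℝ) ^ k ≤ Real.exp k := by
  have : (2 : ℝ) ≤ Real.exp 1 := by
    have := Real.add_one_le_exp (1 : ℝ); linarith
  calc (2 : ℝ) ^ k ≤ Real.exp 1 ^ k := pow_le_pow_left₀ (by norm_num) this k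
    _ = _ := by rw [← Real.exp_nat_mul, mul_one]

lemma upper_asym (r : ℕ) (hr : 2 ≤ r) (Ps : Finset (Finset (Finset ℕ)))
    (hPs : ∀ P ∈ Ps, IsPartitePattern r P) (s : Fin r → Bool) (hs : signPat r s ∉ Ps) :
    ∃ c₂ : ℝ, 0 < c₂ ∧ ∀ n : ℕ, 1 ≤ n →
      (((pm r (Icc 1 (r * n))).filter (fun M =>
        ¬ (zClique r ↑Ps M : ℝ) ≤ c₂ * (n : ℝ) ^ (1 - (1 : ℝ) / (r : ℝ)))).card : ℝ) ≤
        Real.exp (-(n : ℝ) ^ (1 - (1 : ℝ) / (r : ℝ))) * nm r n := by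
  have hC := C0_pos r
  have hr2 : (2 : ℝ) ≤ r := by exact_mod_cast hr
  set A : ℝ := r * 2 ^ (r - 1) * (2 * r) ^ r * C0 r with hA
  have hA0 : 0 < A := by positivity
  set c₂ : ℝ := Real.exp 1 * Real.exp 1 * A + 2 * 2 ^ (r - 1) + 1 with hc
  have hc0 : 0 < c₂ := by positivity
  refine ⟨c₂, hc0, fun n hn => ?_⟩
  obtain ⟨a, ha1, -, har, hθ⟩ := root_setup hr hn
  rw [hθ]
  set θ := a ^ (r - 1) with hθd
  have ha0 : 0 < a := by linarith
  have hθ0 : 0 < θ := by positivity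
  have hn1 : (1 : ℝ) ≤ n := by exact_mod_cast hn
  set m := ⌈a⌉₊ with hm
  have hma : a ≤ m := Nat.le_ceil a
  have hm2 : (m : ℝ) ≤ 2 * a := by
    have := Nat.ceil_lt_add_one ha0.le
    linarith
  have hm0 : 0 < m := Nat.ceil_pos.2 ha0
  have hm0' : (0 : ℝ) < m := by exact_mod_cast hm0
  set L := r * n / m + 1 with hL
  have hLm : r * n < m * L := by
    rw [hL]; exact Nat.lt_mul_div_succ _ hm0
  have ha_split : a ^ r = a * θ := by
    rw [hθd, ← pow_succ']; congr 1; omega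
  have hθ1 : 1 ≤ θ := one_le_pow₀ ha1
  have hLle : (L : ℝ) ≤ 2 * r * θ := by
    have h1 : ((r * n / m : ℕ) : ℝ) ≤ (r * n : ℕ) / (m : ℝ) := Nat.cast_div_le
    have h2 : ((r * n : ℕ) : ℝ) / (m : ℝ) ≤ r * θ := by
      rw [div_le_iff₀ hm0']
      push_cast
      rw [← har, ha_split]
      calc (r : ℝ) * (a * θ) = r * θ * a := by ring
        _ ≤ r * θ * m := by gcongr
    rw [hL]
    push_cast
    nlinarith
  set x := ⌈c₂ * θ⌉₊ with hx
  have hx0 : 0 < x := Nat.ceil_pos.2 (by positivity)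
  have hxc : c₂ * θ ≤ x := Nat.le_ceil _
  have h := upper_finite hr hm0 n L hn hLm Ps hPs s hs x hx0
  have hN : (0 : ℝ) ≤ nm r n := by positivity
  refine le_trans ?_ (h.trans ?_)
  · apply Nat.cast_le.2
    apply card_le_card
    intro M hM
    obtain ⟨hM, hz⟩ := mem_filter.1 hM
    refine mem_filter.2 ⟨hM, Nat.ceil_le.2 ?_⟩
    push Not at hz
    exact hz.le
  · apply mul_le_mul_of_nonneg_right _ hN
    have hmp : (m : ℝ) ^ (r - 1) ≤ 2 ^ (r - 1) * θ := by
      rw [hθd, ← mul_pow]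
      exact pow_le_pow_left₀ hm0'.le hm2 _
    have h4 : (4 : ℝ) ^ (m ^ (r - 1)) ≤ Real.exp (2 * (2 ^ (r - 1) * θ)) := by
      rw [show (4 : ℝ) = 2 ^ 2 by norm_num, ← pow_mul]
      refine (two_pow_exp _).trans (Real.exp_le_exp.2 ?_)
      push_cast
      linarith
    have hb : Real.exp 1 * (r * m ^ (r - 1) * L ^ r : ℝ) * (C0 r / (n : ℝ) ^ (r - 1)) / x
        ≤ Real.exp (-1) := by
      have e1 : (r * m ^ (r - 1) * L ^ r : ℝ) * (C0 r / (n : ℝ) ^ (r - 1)) ≤ A * θ := by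
        have hnp : (0 : ℝ) < (n : ℝ) ^ (r - 1) := by positivity
        rw [mul_div_assoc', div_le_iff₀ hnp]
        have e2 : (n : ℝ) ^ (r - 1) = θ ^ r := by rw [← har, hθd, ← pow_mul, ← pow_mul, mul_comm]
        rw [e2]
        calc (r * m ^ (r - 1) * L ^ r : ℝ) * C0 r
            ≤ (r * (2 ^ (r - 1) * θ) * (2 * r * θ) ^ r) * C0 r := by gcongr
          _ = A * θ * θ ^ r := by rw [hA, mul_pow (2 * (r : ℝ)) θ r]; ring
      have hx0' : (0 : ℝ) < x := by exact_mod_cast hx0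
      rw [div_le_iff₀ hx0', Real.exp_neg, mul_assoc]
      have e3 : Real.exp 1 * (A * θ) ≤ (Real.exp 1)⁻¹ * x := by
        rw [inv_mul_eq_div, le_div_iff₀ (Real.exp_pos 1)]
        refine le_trans ?_ hxc
        rw [hc]
        have : 0 ≤ (2 * 2 ^ (r - 1) + 1) * θ := by positivity
        nlinarith
      refine le_trans ?_ e3
      gcongr
    have h5 := pow_exp_bound (by positivity) hb (by norm_num) hxc
    calc _ ≤ Real.exp (2 * (2 ^ (r - 1) * θ)) * Real.exp (-(1 * (c₂ * θ))) := by gcongr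
      _ = Real.exp (2 * (2 ^ (r - 1) * θ) + -(1 * (c₂ * θ))) := by rw [Real.exp_add]
      _ ≤ _ := by
        apply Real.exp_le_exp.2
        rw [hc]
        have : 0 ≤ Real.exp 1 * Real.exp 1 * A * θ := by positivity
        nlinarith

lemma lower_asym (r : ℕ) (hr : 2 ≤ r) (Ps : Finset (Finset (Finset ℕ)))
    (s : Fin r → Bool)
    (hs : ∀ t, t ≠ s → (t ≠ fun i => !s i) → signPat r t ∈ Ps) :
    ∃ c₁ B : ℝ, 0 < c₁ ∧ 0 < B ∧ ∃ R : ℝ, ∀ n : ℕ, 3 ≤ n → R ≤ (n : ℝ) ^ ((1 : ℝ) / r) →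
      (((pm r (Icc 1 (r * n))).filter (fun M =>
        ¬ c₁ * (n : ℝ) ^ (1 - (1 : ℝ) / (r : ℝ)) ≤ (zClique r ↑Ps M : ℝ))).card : ℝ) ≤
        (4 * (1 / (B * (n : ℝ) ^ (1 - (1 : ℝ) / (r : ℝ))) + (((n : ℝ) / (n - 2)) ^ r - 1)) +
          Real.exp (-(n : ℝ) ^ (1 - (1 : ℝ) / (r : ℝ)))) * nm r n := by
  have hC := C0_pos r
  have hr2 : (2 : ℝ) ≤ r := by exact_mod_cast hr
  set B : ℝ := 1 / ((8 * r) ^ r * r ^ r) with hB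
  have hB0 : 0 < B := by positivity
  set T : ℝ := (2 ^ (r - 1) + 1) * 4 / B with hT
  have hT0 : 0 < T := by positivity
  set δ : ℝ := B / (4 * Real.exp 1 * C0 r) * Real.exp (-T) with hδ
  have hδ0 : 0 < δ := by positivity
  refine ⟨δ, B, hδ0, hB0, max (4 * r) (4 / B), fun n hn hR => ?_⟩
  obtain ⟨a, ha1, haeq, har, hθ⟩ := root_setup hr (by omega : 1 ≤ n)
  rw [← haeq] at hR
  have hR1 : 4 * (r : ℝ) ≤ a := (le_max_left _ _).trans hR
  have hR2 : 4 / B ≤ a := (le_max_right _ _).trans hR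
  rw [hθ]
  set θ := a ^ (r - 1) with hθd
  have ha0 : 0 < a := by linarith
  have hθ0 : 0 < θ := by positivity
  have haθ : a ≤ θ := le_self_pow₀ ha1 (by omega)
  have hn3 : (3 : ℝ) ≤ n := by exact_mod_cast hn
  set m := ⌈a⌉₊ with hm
  have hma : a ≤ m := Nat.le_ceil a
  have hm2 : (m : ℝ) ≤ 2 * a := by
    have := Nat.ceil_lt_add_one ha0.le
    linarith
  have hm0 : 0 < m := Nat.ceil_pos.2 ha0
  have hm0' : (0 : ℝ) < m := by exact_mod_cast hm0
  have ha_split : a ^ r = a * θ := by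
    rw [hθd, ← pow_succ']; congr 1; omega
  have hrm0 : 0 < 2 * r * m := by positivity
  set L := n / (2 * r * m) with hL
  have hnm : (2 * r * m : ℝ) ≤ n := by
    rw [← har, ha_split]
    calc (2 * r * m : ℝ) ≤ 2 * r * (2 * a) := by gcongr
      _ = (4 * r) * a := by ring
      _ ≤ a * θ := by nlinarith
  have hL1 : 1 ≤ L := by
    rw [hL, Nat.one_le_div_iff hrm0]
    exact_mod_cast hnm
  have hL1' : (1 : ℝ) ≤ L := by exact_mod_cast hL1
  have hLub : (L : ℝ) ≤ θ := by
    have h1 : ((n / (2 * r * m) : ℕ) : ℝ) ≤ n / ((2 * r * m : ℕ) : ℝ) := Nat.cast_div_le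
    refine h1.trans ?_
    rw [div_le_iff₀ (by exact_mod_cast hrm0), ← har, ha_split]
    push_cast
    calc a * θ ≤ m * θ := by gcongr
      _ ≤ (2 * r) * (m * θ) := le_mul_of_one_le_left (by positivity) (by linarith)
      _ = _ := by ring
  have hLlb : θ / (8 * r) ≤ L := by
    have h1 : n < (2 * r * m) * (L + 1) := by
      rw [hL]; exact Nat.lt_mul_div_succ _ hrm0
    have h2 : (n : ℝ) < (2 * r * m) * (L + 1) := by exact_mod_cast h1
    rw [div_le_iff₀ (by positivity)]
    rw [← har, ha_split] at h2
    have h3 : a * θ ≤ a * (L * (8 * r)) := by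
      calc a * θ ≤ (2 * r * m) * (L + 1) := h2.le
        _ ≤ (2 * r * (2 * a)) * (L + L) := by gcongr
        _ = _ := by ring
    exact le_of_mul_le_mul_left h3 ha0
  have hLcond : L * (r * (r * m) + 1) ≤ r * n := by
    have h1 : L * (2 * r * m) ≤ n := by rw [hL]; exact Nat.div_mul_le_self _ _
    have h2 : 1 ≤ r * (r * m) := Nat.one_le_iff_ne_zero.2 (by positivity)
    calc L * (r * (r * m) + 1) ≤ L * (r * (r * m) + r * (r * m)) := by gcongr
      _ = r * (L * (2 * r * m)) := by ring
      _ ≤ r * n := by gcongr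
  have hmθ : θ ≤ (m : ℝ) ^ (r - 1) := pow_le_pow_left₀ ha0.le hma _
  have hmp : (m : ℝ) ^ (r - 1) ≤ 2 ^ (r - 1) * θ := by
    rw [hθd, ← mul_pow]
    exact pow_le_pow_left₀ hm0'.le hm2 _
  set μ : ℝ := (m ^ (r - 1) * L ^ r : ℝ) * (n / (r * n).choose r) with hμ
  have e2 : (n : ℝ) ^ (r - 1) = θ ^ r := by rw [← har, hθd, ← pow_mul, ← pow_mul, mul_comm]
  have hn0 : (0 : ℝ) < n := by linarith
  have hch0 : (0 : ℝ) < (r * n).choose r := by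
    exact_mod_cast Nat.choose_pos (Nat.le_mul_of_pos_right r (by omega))
  have hμB : B * θ ≤ μ := by
    have hch : ((r * n).choose r : ℝ) ≤ (r * n) ^ r := by
      exact_mod_cast Nat.choose_le_pow (r * n) r
    have h1 : (n : ℝ) / (r * n) ^ r ≤ n / (r * n).choose r := by gcongr
    have h2 : (n : ℝ) / (r * n) ^ r = 1 / (r ^ r * θ ^ r) := by
      rw [← e2, mul_pow, div_eq_div_iff (by positivity) (by positivity)]
      have : (n : ℝ) ^ r = n * n ^ (r - 1) := by rw [← pow_succ']; congr 1; omega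
      rw [this]; ring
    calc B * θ = (θ * (θ / (8 * r)) ^ r) * (1 / (r ^ r * θ ^ r)) := by
          rw [hB, div_pow]; field_simp
      _ ≤ μ := by
          rw [hμ, ← h2]
          gcongr
  have hμ0 : 0 < μ := lt_of_lt_of_le (by positivity) hμB
  have hBθ : 4 ≤ B * θ := by
    rw [div_le_iff₀ hB0] at hR2
    nlinarith
  set x := ⌈B * θ / 4⌉₊ with hx
  have hx0 : 0 < x := Nat.ceil_pos.2 (by positivity)
  have hxc : B * θ / 4 ≤ x := Nat.le_ceil _
  have hxu : (x : ℝ) ≤ μ / 2 := by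
    have := Nat.ceil_lt_add_one (a := B * θ / 4) (by positivity)
    have h' : (x : ℝ) < B * θ / 4 + 1 := this
    linarith
  have h := lower_finite hr hm0 n L hn hL1 hLcond Ps s hs x hx0 (δ * θ) μ (by positivity) hμ hxu
  have hN : (0 : ℝ) ≤ nm r n := by positivity
  have hset : (pm r (Icc 1 (r * n))).filter (fun M => ¬ δ * θ ≤ (zClique r ↑Ps M : ℝ)) =
      (pm r (Icc 1 (r * n))).filter (fun M => (zClique r ↑Ps M : ℝ) < δ * θ) := by
    simp only [not_le]
  rw [hset]
  refine h.trans ?_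
  rw [← add_mul]
  apply mul_le_mul_of_nonneg_right _ hN
  apply add_le_add
  · have : 1 / μ ≤ 1 / (B * θ) := by gcongr
    linarith
  · have h4 : (2 : ℝ) ^ (m ^ (r - 1)) ≤ Real.exp (2 ^ (r - 1) * θ) := by
      refine (two_pow_exp _).trans (Real.exp_le_exp.2 ?_)
      push_cast
      exact hmp
    have hx0' : (0 : ℝ) < x := by exact_mod_cast hx0
    have hb : Real.exp 1 * (δ * θ * L ^ r) * (C0 r / (n : ℝ) ^ (r - 1)) / x ≤ Real.exp (-T) := by
      rw [div_le_iff₀ hx0', e2]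
      have hE := Real.exp_pos 1
      calc Real.exp 1 * (δ * θ * L ^ r) * (C0 r / θ ^ r)
          ≤ Real.exp 1 * (δ * θ * θ ^ r) * (C0 r / θ ^ r) := by gcongr
        _ = Real.exp (-T) * (B * θ / 4) := by
            rw [hδ]; field_simp
        _ ≤ _ := by gcongr
    have h5 := pow_exp_bound (by positivity) hb hT0.le hxc
    have h6 : T * (B * θ / 4) = (2 ^ (r - 1) + 1) * θ := by
      rw [hT]; field_simp
    rw [h6] at h5
    calc _ ≤ Real.exp (2 ^ (r - 1) * θ) * Real.exp (-((2 ^ (r - 1) + 1) * θ)) := by gcongr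
      _ = Real.exp (2 ^ (r - 1) * θ + -((2 ^ (r - 1) + 1) * θ)) := by rw [Real.exp_add]
      _ = _ := by congr 1; ring

/-- **Proposition (all but one r-partite pattern).** For every `r ≥ 2` and every set `Ps` of
`r`-partite `r`-patterns with `|Ps| = 2^(r−1) − 1`, a.a.s. `z_Ps(RM_n^(r)) = Θ(n^(1−1/r))`. -/
theorem aas_partite_minus_one (r : ℕ) (hr : 2 ≤ r) (Ps : Finset (Finset (Finset ℕ)))
    (hPs : ∀ P ∈ Ps, IsPartitePattern r P) (hcard : Ps.card = 2 ^ (r - 1) - 1) :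
    ∃ c₁ c₂ : ℝ, 0 < c₁ ∧ 0 < c₂ ∧
      Filter.Tendsto
        (fun n : ℕ => prob r n (fun M =>
          c₁ * (n : ℝ) ^ (1 - (1 : ℝ) / (r : ℝ)) ≤ (zClique r ↑Ps M : ℝ) ∧
          (zClique r ↑Ps M : ℝ) ≤ c₂ * (n : ℝ) ^ (1 - (1 : ℝ) / (r : ℝ))))
        Filter.atTop (nhds 1) := by
  obtain ⟨s, hs1, hs2⟩ := exists_missing (by omega) Ps hPs hcard
  obtain ⟨c₂, hc2, hup⟩ := upper_asym r hr Ps hPs s hs1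
  obtain ⟨c₁, B, hc1, hB, R, hlo⟩ := lower_asym r hr Ps s hs2
  refine ⟨c₁, c₂, hc1, hc2, ?_⟩
  have hr2 : (2 : ℝ) ≤ r := by exact_mod_cast hr
  have hexp : 0 < 1 - (1 : ℝ) / r := by
    rw [sub_pos, div_lt_one (by linarith)]; linarith
  have hθ : Filter.Tendsto (fun n : ℕ => (n : ℝ) ^ (1 - (1 : ℝ) / (r : ℝ)))
      Filter.atTop Filter.atTop :=
    (tendsto_rpow_atTop hexp).comp tendsto_natCast_atTop_atTop
  have hroot : Filter.Tendsto (fun n : ℕ => (n : ℝ) ^ ((1 : ℝ) / (r : ℝ)))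
      Filter.atTop Filter.atTop :=
    (tendsto_rpow_atTop (by positivity)).comp tendsto_natCast_atTop_atTop
  have t1 : Filter.Tendsto (fun n : ℕ => Real.exp (-(n : ℝ) ^ (1 - (1 : ℝ) / (r : ℝ))))
      Filter.atTop (nhds 0) := Real.tendsto_exp_neg_atTop_nhds_zero.comp hθ
  have t2 : Filter.Tendsto (fun n : ℕ => 1 / (B * (n : ℝ) ^ (1 - (1 : ℝ) / (r : ℝ))))
      Filter.atTop (nhds 0) := by
    exact (hθ.const_mul_atTop hB).inv_tendsto_atTop.congr (fun n => (one_div _).symm)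
  have t3 : Filter.Tendsto (fun n : ℕ => ((n : ℝ) / (n - 2)) ^ r - 1) Filter.atTop (nhds 0) := by
    have h1 : Filter.Tendsto (fun n : ℕ => 1 + 2 * ((n : ℝ) - 2)⁻¹) Filter.atTop
        (nhds (1 + 2 * 0)) := by
      apply Filter.Tendsto.const_add
      apply Filter.Tendsto.const_mul
      apply Filter.Tendsto.inv_tendsto_atTop
      exact Filter.tendsto_atTop_add_const_right _ _ tendsto_natCast_atTop_atTop
    have h2 : Filter.Tendsto (fun n : ℕ => (n : ℝ) / (n - 2)) Filter.atTop (nhds (1 + 2 * 0)) := by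
      refine h1.congr' ?_
      filter_upwards [Filter.eventually_ge_atTop 3] with n hn
      have : (3 : ℝ) ≤ n := by exact_mod_cast hn
      have : (n : ℝ) - 2 ≠ 0 := by linarith
      field_simp
      ring
    have h3 := (h2.pow r).sub_const 1
    simpa using h3
  have tl : Filter.Tendsto (fun n : ℕ => 1 -
      ((4 * (1 / (B * (n : ℝ) ^ (1 - (1 : ℝ) / (r : ℝ))) + (((n : ℝ) / (n - 2)) ^ r - 1)) +
          Real.exp (-(n : ℝ) ^ (1 - (1 : ℝ) / (r : ℝ)))) +
        Real.exp (-(n : ℝ) ^ (1 - (1 : ℝ) / (r : ℝ))))) Filter.atTop (nhds 1) := by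
    have := ((((t2.add t3).const_mul 4).add t1).add t1).const_sub 1
    simpa using this
  refine tendsto_of_tendsto_of_tendsto_of_le_of_le' tl tendsto_const_nhds ?_ ?_
  · filter_upwards [Filter.eventually_ge_atTop 3, hroot.eventually_ge_atTop R] with n hn hnR
    have hu := hup n (by omega)
    have hl := hlo n hn hnR
    have hN : (0 : ℝ) < nm r n := by exact_mod_cast nm_pos (by omega) n
    rw [prob, matchingFamilies_eq (by omega)]
    change _ ≤ _ / (nm r n : ℝ)
    rw [le_div_iff₀ hN]
    set θ := (n : ℝ) ^ (1 - (1 : ℝ) / (r : ℝ)) with hθd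
    have hsplit : (pm r (Icc 1 (r * n))).card ≤
        ((pm r (Icc 1 (r * n))).filter (fun M => c₁ * θ ≤ (zClique r ↑Ps M : ℝ) ∧
          (zClique r ↑Ps M : ℝ) ≤ c₂ * θ)).card +
        (((pm r (Icc 1 (r * n))).filter (fun M => ¬ c₁ * θ ≤ (zClique r ↑Ps M : ℝ))).card +
        ((pm r (Icc 1 (r * n))).filter (fun M => ¬ (zClique r ↑Ps M : ℝ) ≤ c₂ * θ)).card) := by
      refine le_trans ?_ ((card_union_le _ _).trans (Nat.add_le_add_left (card_union_le _ _) _))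
      apply card_le_card
      intro M hM
      simp only [mem_union, mem_filter, hM, true_and]
      tauto
    have hsplit' : (nm r n : ℝ) ≤ _ := Nat.cast_le.2 hsplit
    rw [Nat.cast_add, Nat.cast_add] at hsplit'
    have key := hsplit'.trans (add_le_add_right (add_le_add hl hu) _)
    rw [← add_mul] at key
    rw [sub_mul, one_mul, sub_le_iff_le_add]
    convert key using 3
    · rfl
    · congr!
  · filter_upwards with n
    rw [prob]
    apply div_le_one_of_le₀ _ (by positivity)
    exact_mod_cast card_le_card (filter_subset _ _)
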